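/- arXiv:1408.2245 — 6 statements merged into one kernel-verified Lean document; each statement's English description precedes it below -/
import Mathlib

section
/- Let x > -1 be fixed. Then the map a ↦ L(x,a) is strictly increasing on the interval (4/15, ∞), and lim_{a→∞} L(x,a) = (1/2)·ln(x² + x + 1/3). -/
open Real Filter Set

/-- The digamma function ψ(x) = Γ'(x)/Γ(x), as the derivative of log ∘ Γ. -/
noncomputable def digamma (x : ℝ) : ℝ := deriv (fun y : ℝ => Real.log (Real.Gamma y)) x

/-- L(x,a) = (1/(90a²+2))·ln(x²+x+(3a+1)/3) + (45a²/(90a²+2))·ln(x²+x+(15a−1)/(45a)). -/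
noncomputable def L (x a : ℝ) : ℝ :=
  (1 / (90 * a ^ 2 + 2)) * Real.log (x ^ 2 + x + (3 * a + 1) / 3) +
    (45 * a ^ 2 / (90 * a ^ 2 + 2)) * Real.log (x ^ 2 + x + (15 * a - 1) / (45 * a))

/-!
Write `m = x² + x + 1/3`. The two arguments of the logarithm in `L x a` are `m + a` and
`m - 1 / (45 a)`, and their weights, once doubled, are the probabilities of the centred distribution
on `{a, -1 / (45 a)}`. Hence `2 L x a = 𝔼[log (m + X)]`, where `X` takes two values and has mean `0`
and variance `1/45` for every `a`. With mean and variance fixed, the derivative in `a` of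
`𝔼[f (m + X)]` is a positive multiple of the error of the trapezoidal rule for `f'` between the two
atoms, which is positive when `f'` is strictly convex. As `a → ∞` the mass concentrates at `m`.
-/

open scoped Topology
open Asymptotics

theorem two_mul_slope_lt_add_of_strictConvexOn {f f' : ℝ → ℝ} {a b : ℝ} (hab : a < b)
    (hf : ∀ y ∈ Icc a b, HasDerivAt f (f' y) y) (hf' : StrictConvexOn ℝ (Icc a b) f') :
    2 * slope f a b < f' a + f' b := by
  have ha : a ∈ Icc a b := left_mem_Icc.2 hab.le
  have hb : b ∈ Icc a b := right_mem_Icc.2 hab.le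
  let g : ℝ → ℝ := fun y ↦ f' a * (y - a) + slope f' a b * (y - a) ^ 2 / 2 - f y
  have hg : ∀ y ∈ Icc a b, HasDerivAt g (f' a + slope f' a b * (y - a) - f' y) y := by
    intro y hy
    have hlin : HasDerivAt (fun z ↦ z - a) 1 y := (hasDerivAt_id' y).sub_const a
    refine (((hlin.const_mul (f' a)).add
      (((hlin.pow 2).const_mul (slope f' a b)).div_const 2)).sub (hf y hy)).congr_deriv ?_
    ring
  obtain ⟨c, hc, hgc⟩ := exists_hasDerivAt_eq_slope g _ hab
    (fun y hy ↦ (hg y hy).continuousAt.continuousWithinAt)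
    (fun y hy ↦ hg y (Ioo_subset_Icc_self hy))
  have below_chord : f' c < f' a + slope f' a b * (c - a) := by
    have hsecant := hf'.secant_strict_mono ha (Ioo_subset_Icc_self hc) hb hc.1.ne' hab.ne' hc.2
    rw [← slope_def_field f' a b, div_lt_iff₀ (sub_pos.2 hc.1)] at hsecant
    linarith
  have hslope : (g b - g a) / (b - a) = (f' a + f' b) / 2 - slope f a b := by
    have : b - a ≠ 0 := (sub_pos.2 hab).ne'
    simp only [g, slope_def_field]
    field_simp
    ring
  linarith

/-- The expectation of `f (m + X)`, where `X` is the centred random variable of variance `v` with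
the two values `a` and `-v / a`, taken with probabilities `v / (a ^ 2 + v)` and
`a ^ 2 / (a ^ 2 + v)`. The probabilistic reading needs `0 ≤ v` and
`a ≠ 0`; at `a = 0` the convention `v / 0 = 0` makes it meaningless. -/
noncomputable def twoPointMean (f : ℝ → ℝ) (m v a : ℝ) : ℝ :=
  (v * f (m + a) + a ^ 2 * f (m - v / a)) / (a ^ 2 + v)

section twoPointMean

variable {f f' : ℝ → ℝ} {m v a : ℝ}

theorem hasDerivAt_twoPointMean (ha : a ≠ 0) (hav : a ^ 2 + v ≠ 0)
    (hright : HasDerivAt f (f' (m + a)) (m + a))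
    (hleft : HasDerivAt f (f' (m - v / a)) (m - v / a)) :
    HasDerivAt (twoPointMean f m v)
      (v / (a ^ 2 + v) *
        (f' (m - v / a) + f' (m + a) - 2 * slope f (m - v / a) (m + a))) a := by
  have hsq : HasDerivAt (fun b : ℝ ↦ b ^ 2) (2 * a) a := by simpa using hasDerivAt_pow 2 a
  have hatom : HasDerivAt (fun b : ℝ ↦ m - v / b) (v / a ^ 2) a := by
    simpa [div_eq_mul_inv] using ((hasDerivAt_inv ha).const_mul v).const_sub m
  have hnum := ((hright.comp_const_add m a).const_mul v).add (hsq.mul (hleft.comp a hatom))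
  have hgap : m + a - (m - v / a) = (a ^ 2 + v) / a := by field_simp; ring
  refine (hnum.div (hsq.add_const v) hav).congr_deriv ?_
  rw [slope_def_field, hgap]
  simp only [Pi.add_apply, Pi.mul_apply, Function.comp_apply]
  field_simp
  ring

theorem strictMonoOn_twoPointMean {s : Set ℝ} (hv : 0 < v) (hs : Convex ℝ s) (hpos : s ⊆ Ioi 0)
    (hf : ∀ a ∈ s, ∀ y ∈ Icc (m - v / a) (m + a), HasDerivAt f (f' y) y)
    (hf' : ∀ a ∈ s, StrictConvexOn ℝ (Icc (m - v / a) (m + a)) f') :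
    StrictMonoOn (twoPointMean f m v) s := by
  have atoms_lt : ∀ a ∈ s, m - v / a < m + a := fun a ha ↦ by
    have ha₀ : 0 < a := hpos ha
    have : 0 < v / a := div_pos hv ha₀
    linarith
  have hderiv : ∀ a ∈ s, HasDerivAt (twoPointMean f m v) _ a := fun a ha ↦
    hasDerivAt_twoPointMean (hpos ha).ne' (by positivity)
      (hf a ha _ (right_mem_Icc.2 (atoms_lt a ha).le))
      (hf a ha _ (left_mem_Icc.2 (atoms_lt a ha).le))
  refine strictMonoOn_of_hasDerivWithinAt_pos hs
    (fun a ha ↦ (hderiv a ha).continuousAt.continuousWithinAt)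
    (fun a ha ↦ (hderiv a (interior_subset ha)).hasDerivWithinAt) fun a ha ↦ ?_
  replace ha := interior_subset ha
  exact mul_pos (by positivity) <| sub_pos.2 <|
    two_mul_slope_lt_add_of_strictConvexOn (atoms_lt a ha) (hf a ha) (hf' a ha)

theorem tendsto_twoPointMean_atTop (hf : ContinuousAt f m) (hgrowth : f =o[atTop] (· ^ 2)) :
    Tendsto (twoPointMean f m v) atTop (𝓝 (f m)) := by
  have hsq : Tendsto (fun a : ℝ ↦ a ^ 2) atTop atTop := tendsto_pow_atTop two_ne_zero
  have far_atom : Tendsto (fun a ↦ f (m + a) / a ^ 2) atTop (𝓝 0) := by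
    have hshift : (fun a : ℝ ↦ (m + a) ^ 2) =O[atTop] (· ^ 2) :=
      (((isLittleO_const_id_atTop m).isBigO).add (isBigO_refl _ _)).pow 2
    exact ((hgrowth.comp_tendsto (tendsto_atTop_add_const_left _ m tendsto_id)).trans_isBigO
      hshift).tendsto_div_nhds_zero
  have near_atom : Tendsto (fun a ↦ f (m - v / a)) atTop (𝓝 (f m)) := by
    refine hf.tendsto.comp ?_
    simpa using (tendsto_id.const_div_atTop v).const_sub m
  have hlim : Tendsto (fun a ↦ (v * (f (m + a) / a ^ 2) + f (m - v / a)) / (1 + v / a ^ 2))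
      atTop (𝓝 ((v * 0 + f m) / (1 + 0))) :=
    ((far_atom.const_mul v).add near_atom).div ((hsq.const_div_atTop v).const_add 1) (by simp)
  rw [mul_zero, zero_add, add_zero, div_one] at hlim
  refine hlim.congr' ?_
  filter_upwards [eventually_ne_atTop 0] with a ha
  have : a ^ 2 ≠ 0 := pow_ne_zero 2 ha
  rw [twoPointMean, ← mul_div_mul_right _ _ this]
  congr 1 <;> field_simp

end twoPointMean

theorem strictMonoOn_twoPointMean_log {m v : ℝ} (hm : 0 < m) (hv : 0 < v) :
    StrictMonoOn (twoPointMean log m v) (Ioi (v / m)) := by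
  have hpos : Ioi (v / m) ⊆ Ioi 0 := Ioi_subset_Ioi (div_pos hv hm).le
  have hatoms : ∀ a ∈ Ioi (v / m), Icc (m - v / a) (m + a) ⊆ Ioi 0 := fun a ha y hy ↦ by
    have : v / a < m := (div_lt_comm₀ hm (hpos ha)).1 ha
    exact (sub_pos.2 this).trans_le hy.1
  have hinv : StrictConvexOn ℝ (Ioi 0) fun y : ℝ ↦ y⁻¹ := by
    simpa only [zpow_neg_one] using
      strictConvexOn_zpow (m := -1) (by norm_num) (by norm_num)
  exact strictMonoOn_twoPointMean hv (convex_Ioi _) hpos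
    (fun a ha y hy ↦ hasDerivAt_log (hatoms a ha hy).ne')
    (fun a ha ↦ hinv.subset (hatoms a ha) (convex_Icc _ _))

theorem tendsto_twoPointMean_log_atTop {m : ℝ} (v : ℝ) (hm : m ≠ 0) :
    Tendsto (twoPointMean log m v) atTop (𝓝 (log m)) :=
  tendsto_twoPointMean_atTop (continuousAt_log hm) <|
    isLittleO_log_id_atTop.trans <| by
      simpa only [pow_one, Function.id_def] using isLittleO_pow_pow_atTop_of_lt one_lt_two

theorem L_eq_half_mul_twoPointMean_log (x : ℝ) {a : ℝ} (ha : a ≠ 0) :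
    L x a = 1 / 2 * twoPointMean log (x ^ 2 + x + 1 / 3) (1 / 45) a := by
  have hright : x ^ 2 + x + (3 * a + 1) / 3 = x ^ 2 + x + 1 / 3 + a := by ring
  have hleft : x ^ 2 + x + (15 * a - 1) / (45 * a) = x ^ 2 + x + 1 / 3 - 1 / 45 / a := by
    field_simp
    ring
  rw [L, twoPointMean, hright, hleft]
  field_simp
  ring

theorem one_twelfth_le_sq_add_self_add_third (x : ℝ) : 1 / 12 ≤ x ^ 2 + x + 1 / 3 := by
  linarith [sq_nonneg (x + 1 / 2)]

theorem one_div_div_sq_add_self_add_third_le (x : ℝ) : 1 / 45 / (x ^ 2 + x + 1 / 3) ≤ 4 / 15 := by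
  have hm := one_twelfth_le_sq_add_self_add_third x
  rw [div_le_iff₀ (by linarith)]
  linarith

/-- The threshold is the value of `a` at which the lower atom `m - 1 / (45 a)` vanishes; its maximum
over all `x` is `4 / 15`, attained at `x = -1 / 2`. -/
theorem stmt_0_general (x : ℝ) :
    StrictMonoOn (fun a ↦ L x a) (Ioi (1 / 45 / (x ^ 2 + x + 1 / 3))) ∧
      Tendsto (fun a ↦ L x a) atTop (𝓝 (1 / 2 * log (x ^ 2 + x + 1 / 3))) := by
  have hm : 0 < x ^ 2 + x + 1 / 3 := by linarith [one_twelfth_le_sq_add_self_add_third x]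
  constructor
  · have L_eq : ∀ a ∈ Ioi (1 / 45 / (x ^ 2 + x + 1 / 3)),
        L x a = 1 / 2 * twoPointMean log (x ^ 2 + x + 1 / 3) (1 / 45) a := fun a ha ↦
      L_eq_half_mul_twoPointMean_log x ((by positivity : (0 : ℝ) < _).trans ha).ne'
    intro a ha b hb hab
    simp only [L_eq a ha, L_eq b hb]
    exact mul_lt_mul_of_pos_left (strictMonoOn_twoPointMean_log hm (by norm_num) ha hb hab)
      one_half_pos
  · refine ((tendsto_twoPointMean_log_atTop (1 / 45) hm.ne').const_mul (1 / 2)).congr' ?_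
    filter_upwards [eventually_ne_atTop 0] with a ha
    exact (L_eq_half_mul_twoPointMean_log x ha).symm

/-- For fixed x > -1, a ↦ L(x,a) is strictly increasing on (4/15, ∞) and
lim_{a→∞} L(x,a) = (1/2)·ln(x² + x + 1/3). -/
theorem stmt_0 (x : ℝ) (hx : -1 < x) :
    StrictMonoOn (fun a : ℝ => L x a) (Set.Ioi (4 / 15)) ∧
      Filter.Tendsto (fun a : ℝ => L x a) Filter.atTop
        (nhds ((1 / 2) * Real.log (x ^ 2 + x + 1 / 3))) :=
  (stmt_0_general x).imp_left fun hmono ↦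
    hmono.mono (Ioi_subset_Ioi (one_div_div_sq_add_self_add_third_le x))
end

section
/- Let x > 0 be fixed. Then on the interval (1/15, ∞) the map a ↦ (∂L/∂x)(x,a) is strictly decreasing, the map a ↦ (∂²L/∂x²)(x,a) is strictly increasing, and the map a ↦ (∂³L/∂x³)(x,a) is strictly decreasing, where the partial derivatives are taken with respect to x. -/
open Real Filter Set

open scoped Topology

/-!
Put `u = t² + t + 1/3` and `c = a - 1/(45a)`. The arguments of the two logarithms in `L t a` are
`u + a` and `u - 1/(45a)`, whose product is `D c = u² + c u - 1/45`, and the weights are such that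
`∂L/∂t = (2t + 1)(u + c) / (2 D c)`. Hence for `a < b`, with `c < d` the corresponding parameters,
the difference of the two derivatives collapses to `(d - c)/90 · (2t + 1)/(D c · D d)`. Up to the
positive constant this is the product of `1/(2t + 1)`, `(2t + 1)/D c` and `(2t + 1)/D d`. All three
factors are positive, with negative first and positive second derivative, and this sign pattern is
multiplicative by Leibniz' rule.
-/

/-- `f` is completely monotone at `x` up to order `n`, in the strict sense: the derivatives of
order `0, …, n` alternate in sign, starting with `0 < f x`. -/
def StrictAlternatingAt (n : ℕ) (f : ℝ → ℝ) (x : ℝ) : Prop :=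
  ContDiffAt ℝ n f x ∧ ∀ k ≤ n, 0 < (-1) ^ k * iteratedDeriv k f x

namespace StrictAlternatingAt

variable {n : ℕ} {f g : ℝ → ℝ} {x : ℝ}

theorem mul (hf : StrictAlternatingAt n f x) (hg : StrictAlternatingAt n g x) :
    StrictAlternatingAt n (f * g) x := by
  refine ⟨hf.1.mul hg.1, fun k hk ↦ ?_⟩
  have hkn : (k : WithTop ℕ∞) ≤ n := mod_cast hk
  rw [iteratedDeriv_mul (hf.1.of_le hkn) (hg.1.of_le hkn), Finset.mul_sum]
  refine Finset.sum_pos (fun i hi ↦ ?_) Finset.nonempty_range_add_one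
  have hik : i ≤ k := Finset.mem_range_succ_iff.mp hi
  have sign_split : (-1 : ℝ) ^ k = (-1) ^ i * (-1) ^ (k - i) := by
    rw [← pow_add, Nat.add_sub_cancel' hik]
  have choose_pos : (0 : ℝ) < k.choose i := mod_cast Nat.choose_pos hik
  calc 0 < k.choose i * ((-1) ^ i * iteratedDeriv i f x)
          * ((-1) ^ (k - i) * iteratedDeriv (k - i) g x) :=
        mul_pos (mul_pos choose_pos (hf.2 i (hik.trans hk))) (hg.2 (k - i) (by lia))
    _ = _ := by rw [sign_split]; ring

theorem const_mul {r : ℝ} (hr : 0 < r) (hf : StrictAlternatingAt n f x) :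
    StrictAlternatingAt n (fun t ↦ r * f t) x := by
  refine ⟨contDiffAt_const.mul hf.1, fun k hk ↦ ?_⟩
  rw [iteratedDeriv_const_mul_field, mul_left_comm]
  exact mul_pos hr (hf.2 k hk)

theorem congr_of_eventuallyEq (hf : StrictAlternatingAt n f x) (hgf : g =ᶠ[𝓝 x] f) :
    StrictAlternatingAt n g x :=
  ⟨hf.1.congr_of_eventuallyEq hgf, fun k hk ↦ by
    rw [hgf.iteratedDeriv_eq k]; exact hf.2 k hk⟩

theorem iteratedDeriv_succ_sub_pos {k : ℕ} (h : StrictAlternatingAt n (deriv (f - g)) x)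
    (hk : k ≤ n) (hf : ContDiffAt ℝ (k + 1 : ℕ) f x) (hg : ContDiffAt ℝ (k + 1 : ℕ) g x) :
    0 < (-1) ^ k * (iteratedDeriv (k + 1) f x - iteratedDeriv (k + 1) g x) := by
  rw [← iteratedDeriv_sub hf hg, iteratedDeriv_succ']
  exact h.2 k hk

end StrictAlternatingAt

theorem strictAlternatingAt_inv_linear (n : ℕ) {c d x : ℝ} (hd : 0 < d) (hx : 0 < d * x + c) :
    StrictAlternatingAt n (fun t ↦ (d * t + c)⁻¹) x := by
  refine ⟨ContDiffAt.inv (by fun_prop) hx.ne', fun k _ ↦ ?_⟩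
  rw [iteratedDeriv_eq_iterate, iter_deriv_inv_linear]
  calc 0 < k.factorial * d ^ k * (d * x + c) ^ (-1 - k : ℤ) := by positivity
    _ = ((-1) ^ k * (-1) ^ k) * (k.factorial * d ^ k * (d * x + c) ^ (-1 - k : ℤ)) := by
      rw [← mul_pow]; simp
    _ = _ := by ring

theorem iteratedDeriv_two_div {𝕜 : Type*} [NontriviallyNormedField 𝕜] {f g : 𝕜 → 𝕜} {x : 𝕜}
    (hf : ContDiffAt 𝕜 2 f x) (hg : ContDiffAt 𝕜 2 g x) (hx : g x ≠ 0) :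
    iteratedDeriv 2 (fun t ↦ f t / g t) x =
      ((iteratedDeriv 2 f x * g x - f x * iteratedDeriv 2 g x) * g x
        - 2 * deriv g x * (deriv f x * g x - f x * deriv g x)) / g x ^ 3 := by
  have differentiableAt_near {h : 𝕜 → 𝕜} (hh : ContDiffAt 𝕜 2 h x) :
      ∀ᶠ t in 𝓝 x, DifferentiableAt 𝕜 h t :=
    (hh.eventually (by simp)).mono fun t ht ↦ ht.differentiableAt (by simp)
  have second_deriv {h : 𝕜 → 𝕜} (hh : ContDiffAt 𝕜 2 h x) :
      HasDerivAt (deriv h) (iteratedDeriv 2 h x) x := by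
    rw [iteratedDeriv_succ, iteratedDeriv_one]
    refine DifferentiableAt.hasDerivAt ?_
    simpa [iteratedDerivWithin_univ, iteratedDeriv_one, differentiableWithinAt_univ] using
      hh.contDiffWithinAt.differentiableWithinAt_iteratedDerivWithin (m := 1) (s := univ)
        (by norm_num) (by simp [uniqueDiffOn_univ])
  have first_deriv : deriv (fun t ↦ f t / g t) =ᶠ[𝓝 x]
      fun t ↦ (deriv f t * g t - f t * deriv g t) / g t ^ 2 := by
    filter_upwards [differentiableAt_near hf, differentiableAt_near hg,
      hg.continuousAt.eventually_ne hx] with t hft hgt hg0 using deriv_fun_div hft hgt hg0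
  have hf' := (hf.differentiableAt (by simp)).hasDerivAt
  have hg' := (hg.differentiableAt (by simp)).hasDerivAt
  rw [iteratedDeriv_succ, iteratedDeriv_one, first_deriv.deriv_eq]
  refine ((((second_deriv hf).mul hg').sub (hf'.mul (second_deriv hg))).div (hg'.pow 2)
    (pow_ne_zero 2 hx)).deriv.trans ?_
  simp only [Pi.pow_apply, Pi.sub_apply, Pi.mul_apply, Nat.cast_ofNat, Nat.add_one_sub_one, pow_one]
  field_simp
  ring

/-- The parameter `c = a - 1/(45a)` through which `∂L/∂x` depends on `a`: the sum of the shifts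
`a` and `-1/(45a)` in the two logarithms of `L`. -/
noncomputable def shiftSum (a : ℝ) : ℝ := a - 1 / (45 * a)

theorem shiftSum_strictMonoOn : StrictMonoOn shiftSum (Ioi 0) := by
  intro a (ha : 0 < a) b _ hab
  have : 1 / (45 * b) < 1 / (45 * a) := one_div_lt_one_div_of_lt (by positivity) (by linarith)
  unfold shiftSum
  linarith

theorem neg_four_div_fifteen_lt_shiftSum {a : ℝ} (ha : 1 / 15 < a) : -4 / 15 < shiftSum a := by
  have h := shiftSum_strictMonoOn (mem_Ioi.mpr (by norm_num : (0 : ℝ) < 1 / 15))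
    (mem_Ioi.mpr (by linarith)) ha
  norm_num [shiftSum] at h ⊢
  exact h

/-- The product `u² + c u - 1/45`, `u = t² + t + 1/3`, of the arguments of the two logarithms in
`L t a`, where `c = shiftSum a`. -/
noncomputable def logArgProd (c t : ℝ) : ℝ :=
  (t ^ 2 + t + 1 / 3) ^ 2 + c * (t ^ 2 + t + 1 / 3) - 1 / 45

theorem hasDerivAt_two_mul_add_one (t : ℝ) : HasDerivAt (fun t : ℝ ↦ 2 * t + 1) 2 t := by
  simpa using ((hasDerivAt_id t).const_mul 2).add_const 1

theorem hasDerivAt_sq_add_add_const (r t : ℝ) :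
    HasDerivAt (fun t ↦ t ^ 2 + t + r) (2 * t + 1) t := by
  simpa using (((hasDerivAt_id t).pow 2).add (hasDerivAt_id t)).add_const r

theorem logArgProd_shiftSum {a : ℝ} (ha : a ≠ 0) (t : ℝ) :
    logArgProd (shiftSum a) t =
      (t ^ 2 + t + (3 * a + 1) / 3) * (t ^ 2 + t + (15 * a - 1) / (45 * a)) := by
  unfold logArgProd shiftSum
  field_simp
  ring

section

variable {c t : ℝ}

theorem logArgProd_pos (hc : -4 / 15 < c) (ht : 0 ≤ t) : 0 < logArgProd c t := by
  have hu : 1 / 3 ≤ t ^ 2 + t + 1 / 3 := by linarith [sq_nonneg t]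
  have : 1 / 3 * (1 / 15) < (t ^ 2 + t + 1 / 3) * (t ^ 2 + t + 1 / 3 + c) :=
    mul_lt_mul' hu (by linarith) (by norm_num) (by linarith)
  unfold logArgProd
  linarith

theorem contDiff_logArgProd {n : WithTop ℕ∞} : ContDiff ℝ n (logArgProd c) := by
  unfold logArgProd
  fun_prop

theorem hasDerivAt_logArgProd (c t : ℝ) :
    HasDerivAt (logArgProd c) ((2 * t + 1) * (2 * (t ^ 2 + t + 1 / 3) + c)) t := by
  have hu := hasDerivAt_sq_add_add_const (1 / 3) t
  refine (((hu.pow 2).add (hu.const_mul c)).sub_const (1 / 45)).congr_deriv ?_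
  simp only [Nat.cast_ofNat, Nat.add_one_sub_one, pow_one]
  ring

theorem iteratedDeriv_two_logArgProd (c t : ℝ) :
    iteratedDeriv 2 (logArgProd c) t =
      2 * (2 * (t ^ 2 + t + 1 / 3) + c) + 2 * (2 * t + 1) ^ 2 := by
  rw [iteratedDeriv_succ, iteratedDeriv_one, funext fun t ↦ (hasDerivAt_logArgProd c t).deriv]
  have hu := hasDerivAt_sq_add_add_const (1 / 3) t
  refine ((hasDerivAt_two_mul_add_one t).mul ((hu.const_mul 2).add_const c)).deriv.trans ?_
  ring

/-- Amounts to `(2t + 1) / logArgProd c t` having negative first derivative. -/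
theorem two_mul_logArgProd_lt (hc : -4 / 15 < c) (ht : 0 ≤ t) :
    2 * logArgProd c t < (2 * t + 1) ^ 2 * (2 * (t ^ 2 + t + 1 / 3) + c) := by
  obtain ⟨s, rfl⟩ : ∃ s, c = s - 4 / 15 := ⟨c + 4 / 15, by ring⟩
  have hs : 0 < s := by linarith
  rw [← sub_pos]
  calc 0 < 6 * (t ^ 2 + t) ^ 2 + (2 * s + 14 / 5) * (t ^ 2 + t) + s / 3 + 2 / 5 := by positivity
    _ = _ := by unfold logArgProd; ring

/-- Amounts to `(2t + 1) / logArgProd c t` having positive second derivative. -/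
theorem logArgProd_mul_lt (hc : -4 / 15 < c) (ht : 0 ≤ t) :
    logArgProd c t * (3 * (2 * (t ^ 2 + t + 1 / 3) + c) + (2 * t + 1) ^ 2) <
      (2 * t + 1) ^ 2 * (2 * (t ^ 2 + t + 1 / 3) + c) ^ 2 := by
  obtain ⟨s, rfl⟩ : ∃ s, c = s - 4 / 15 := ⟨c + 4 / 15, by ring⟩
  have hs : 0 < s := by linarith
  rw [← sub_pos]
  calc 0 < 6 * (t ^ 2 + t) ^ 3 + (3 * s + 21 / 5) * (t ^ 2 + t) ^ 2
        + (s ^ 2 + 7 / 15 * s + 34 / 25) * (t ^ 2 + t) + s / 15 + 4 / 25 := by positivity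
    _ = _ := by unfold logArgProd; ring

theorem strictAlternatingAt_linear_div_logArgProd (hc : -4 / 15 < c) (ht : 0 ≤ t) :
    StrictAlternatingAt 2 (fun t ↦ (2 * t + 1) / logArgProd c t) t := by
  have hDpos := logArgProd_pos hc ht
  have hD := hasDerivAt_logArgProd c t
  have hD_smooth : ContDiffAt ℝ 2 (logArgProd c) t := contDiff_logArgProd.contDiffAt
  have hv := hasDerivAt_two_mul_add_one t
  have hv_smooth : ContDiffAt ℝ 2 (fun t : ℝ ↦ 2 * t + 1) t := by fun_prop
  have hv_second : iteratedDeriv 2 (fun t : ℝ ↦ 2 * t + 1) t = 0 := by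
    simp [iteratedDeriv_succ]
  refine ⟨hv_smooth.div hD_smooth hDpos.ne', fun k hk ↦ ?_⟩
  interval_cases k
  · simpa using div_pos (by positivity) hDpos
  · rw [iteratedDeriv_one, deriv_fun_div hv.differentiableAt hD.differentiableAt hDpos.ne',
      hv.deriv, hD.deriv, pow_one, neg_one_mul, ← neg_div]
    exact div_pos (by linarith [two_mul_logArgProd_lt hc ht]) (by positivity)
  · rw [iteratedDeriv_two_div hv_smooth hD_smooth hDpos.ne', hv_second, hv.deriv, hD.deriv,
      iteratedDeriv_two_logArgProd, neg_one_sq, one_mul]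
    refine div_pos ?_ (by positivity)
    linear_combination 2 * (2 * t + 1) * logArgProd_mul_lt hc ht

end

theorem hasDerivAt_L {a t : ℝ} (ha : a ≠ 0) (hD : logArgProd (shiftSum a) t ≠ 0) :
    HasDerivAt (fun t ↦ L t a)
      ((2 * t + 1) * (t ^ 2 + t + 1 / 3 + shiftSum a) / (2 * logArgProd (shiftSum a) t)) t := by
  rw [logArgProd_shiftSum ha] at hD ⊢
  obtain ⟨hX, hY⟩ := mul_ne_zero_iff.mp hD
  refine ((((hasDerivAt_sq_add_add_const _ t).log hX).const_mul _).add
    (((hasDerivAt_sq_add_add_const _ t).log hY).const_mul _)).congr_deriv ?_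
  generalize hXe : t ^ 2 + t + (3 * a + 1) / 3 = X at *
  generalize hYe : t ^ 2 + t + (15 * a - 1) / (45 * a) = Y at *
  have weighted_sum : (t ^ 2 + t + 1 / 3 + shiftSum a) / 2 =
      1 / (90 * a ^ 2 + 2) * Y + 45 * a ^ 2 / (90 * a ^ 2 + 2) * X := by
    rw [← hXe, ← hYe, shiftSum]
    field_simp
    ring
  calc _ = (2 * t + 1) * (1 / (90 * a ^ 2 + 2) * Y + 45 * a ^ 2 / (90 * a ^ 2 + 2) * X)
        / (X * Y) := by field_simp
    _ = _ := by rw [← weighted_sum]; ring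

theorem contDiffAt_L {a t : ℝ} {n : WithTop ℕ∞} (ha : a ≠ 0)
    (hD : logArgProd (shiftSum a) t ≠ 0) : ContDiffAt ℝ n (fun t ↦ L t a) t := by
  rw [logArgProd_shiftSum ha] at hD
  obtain ⟨hX, hY⟩ := mul_ne_zero_iff.mp hD
  unfold L
  refine ContDiffAt.add (contDiffAt_const.mul (ContDiffAt.log ?_ hX))
    (contDiffAt_const.mul (ContDiffAt.log ?_ hY)) <;> fun_prop

theorem deriv_L_sub_L {a b t : ℝ} (ha : a ≠ 0) (hb : b ≠ 0) (ht : 2 * t + 1 ≠ 0)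
    (hDa : logArgProd (shiftSum a) t ≠ 0) (hDb : logArgProd (shiftSum b) t ≠ 0) :
    deriv ((fun t ↦ L t a) - fun t ↦ L t b) t = (shiftSum b - shiftSum a) / 90 *
      ((2 * t + 1)⁻¹ * ((2 * t + 1) / logArgProd (shiftSum a) t *
        ((2 * t + 1) / logArgProd (shiftSum b) t))) := by
  have numerator_sub :
      (t ^ 2 + t + 1 / 3 + shiftSum a) * logArgProd (shiftSum b) t
        - (t ^ 2 + t + 1 / 3 + shiftSum b) * logArgProd (shiftSum a) t
      = (shiftSum b - shiftSum a) / 45 := by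
    unfold logArgProd; ring
  rw [((hasDerivAt_L ha hDa).sub (hasDerivAt_L hb hDb)).deriv]
  field_simp
  linear_combination 270 * numerator_sub

theorem strictAlternatingAt_deriv_L_sub_L {a b x : ℝ} (ha : 1 / 15 < a) (hab : a < b)
    (hx : 0 ≤ x) : StrictAlternatingAt 2 (deriv ((fun t ↦ L t a) - fun t ↦ L t b)) x := by
  have ha0 : 0 < a := by linarith
  have hb0 : 0 < b := by linarith
  have hcd : shiftSum a < shiftSum b := shiftSum_strictMonoOn ha0 hb0 hab
  have hc := neg_four_div_fifteen_lt_shiftSum ha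
  have hv : 0 < 2 * x + 1 := by linarith
  refine (((strictAlternatingAt_inv_linear 2 two_pos hv).mul
    ((strictAlternatingAt_linear_div_logArgProd hc hx).mul
      (strictAlternatingAt_linear_div_logArgProd (hc.trans hcd) hx))).const_mul
    (show 0 < (shiftSum b - shiftSum a) / 90 by linarith)).congr_of_eventuallyEq ?_
  have D_ne_zero {c : ℝ} (hc : -4 / 15 < c) : ∀ᶠ t in 𝓝 x, logArgProd c t ≠ 0 :=
    contDiff_logArgProd (n := 0) |>.continuous.continuousAt.eventually_ne (logArgProd_pos hc hx).ne'
  have v_ne_zero : ∀ᶠ t in 𝓝 x, 2 * t + 1 ≠ 0 :=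
    ContinuousAt.eventually_ne (by fun_prop) hv.ne'
  filter_upwards [v_ne_zero, D_ne_zero hc, D_ne_zero (hc.trans hcd)] with t htv hDa hDb
    using deriv_L_sub_L ha0.ne' hb0.ne' htv hDa hDb

theorem strictAntiOn_neg_one_pow_mul_iteratedDeriv_L {k : ℕ} (hk : k ≤ 2) {x : ℝ} (hx : 0 ≤ x) :
    StrictAntiOn (fun a ↦ (-1) ^ k * iteratedDeriv (k + 1) (fun t ↦ L t a) x) (Ioi (1 / 15)) := by
  intro a ha b hb hab
  have smooth {e : ℝ} (he : 1 / 15 < e) : ContDiffAt ℝ (k + 1 : ℕ) (fun t ↦ L t e) x :=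
    contDiffAt_L (by linarith) (logArgProd_pos (neg_four_div_fifteen_lt_shiftSum he) hx).ne'
  have := (strictAlternatingAt_deriv_L_sub_L ha hab hx).iteratedDeriv_succ_sub_pos hk
    (smooth ha) (smooth hb)
  rwa [mul_sub, sub_pos] at this

/-- For fixed x > 0, on (1/15, ∞): a ↦ ∂L/∂x(x,a) is strictly decreasing,
a ↦ ∂²L/∂x²(x,a) is strictly increasing, and a ↦ ∂³L/∂x³(x,a) is strictly decreasing. -/
theorem stmt_1 (x : ℝ) (hx : 0 < x) :
    StrictAntiOn (fun a : ℝ => deriv (fun t : ℝ => L t a) x) (Set.Ioi (1 / 15)) ∧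
      StrictMonoOn (fun a : ℝ => iteratedDeriv 2 (fun t : ℝ => L t a) x) (Set.Ioi (1 / 15)) ∧
        StrictAntiOn (fun a : ℝ => iteratedDeriv 3 (fun t : ℝ => L t a) x) (Set.Ioi (1 / 15)) := by
  refine ⟨?_, ?_, ?_⟩
  · simpa using strictAntiOn_neg_one_pow_mul_iteratedDeriv_L (k := 0) (by norm_num) hx.le
  · simpa using (strictAntiOn_neg_one_pow_mul_iteratedDeriv_L (k := 1) (by norm_num) hx.le).neg
  · simpa using strictAntiOn_neg_one_pow_mul_iteratedDeriv_L (k := 2) (by norm_num) hx.le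
end

section
/- Let a₁ = (40 + 3√205)/105. Then for every x > -1 and every n ∈ {1,2,3}, one has (−1)ⁿ·F_{a₁}^{(n)}(x) < 0; that is, F_{a₁}'(x) > 0, F_{a₁}''(x) < 0 and F_{a₁}'''(x) > 0 for all x > -1. -/
open Real Filter Set

/-!
A function `F` that tends to `0` at infinity is minus the sum of its differences
`Δ F (x + k) = F (x + k + 1) - F (x + k)`, so the sign of `(Δ F)⁽ⁿ⁾` determines that of `F⁽ⁿ⁾`.
For `F = ψ(· + 1) - L(·, a)` the recurrence of `ψ` makes `(Δ F)'` a rational function of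
`u = x + 1`. Its numerator is linear in `u ^ 2`, and `a₁` is the parameter for which the linear
coefficient vanishes. The signs then reduce to those of the first two derivatives of the reciprocal
of an explicit polynomial.
-/

open Topology Polynomial
open scoped fwdDiff

section ForwardDifference

theorem fwdDiff_comm {M G : Type*} [AddCommMonoid M] [AddCommGroup G] (h k : M) (f : M → G) :
    Δ_[h] (Δ_[k] f) = Δ_[k] (Δ_[h] f) := by
  ext x
  simp only [fwdDiff, add_right_comm x h k]
  abel

theorem iteratedDeriv_fwdDiff {𝕜 E : Type*} [NontriviallyNormedField 𝕜] [NormedAddCommGroup E]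
    [NormedSpace 𝕜 E] {f : 𝕜 → E} {n : ℕ} {h x : 𝕜} (hx : ContDiffAt 𝕜 n f x)
    (hxh : ContDiffAt 𝕜 n f (x + h)) :
    iteratedDeriv n (Δ_[h] f) x = Δ_[h] (iteratedDeriv n f) x := by
  have hshift : ContDiffAt 𝕜 n (fun y ↦ f (y + h)) x :=
    hxh.comp x (contDiffAt_id.add contDiffAt_const)
  exact (iteratedDeriv_fun_sub hshift hx).trans
    (by rw [iteratedDeriv_comp_add_const, fwdDiff])

theorem differentiableAt_iteratedDeriv {𝕜 E : Type*} [NontriviallyNormedField 𝕜]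
    [NormedAddCommGroup E] [NormedSpace 𝕜 E] {f : 𝕜 → E} {n : ℕ} {x : 𝕜}
    (hf : ContDiffAt 𝕜 (n + 1) f x) : DifferentiableAt 𝕜 (iteratedDeriv n f) x :=
  (hf.differentiableAt_iteratedFDeriv (mod_cast n.lt_succ_self)).continuousMultilinear_apply_const _

variable {f : ℝ → ℝ} {c h x : ℝ}

theorem le_of_fwdDiff_nonpos_of_tendsto {l : ℝ} (hh : 0 < h) (hlim : Tendsto f atTop (𝓝 l))
    (hΔ : ∀ y > c, Δ_[h] f y ≤ 0) (hx : c < x) : l ≤ f x := by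
  have hanti : Antitone fun k : ℕ ↦ f (x + k * h) := by
    refine antitone_nat_of_succ_le fun k ↦ ?_
    have hstep := hΔ (x + k * h) (hx.trans_le (le_add_of_nonneg_right (by positivity)))
    rw [fwdDiff, sub_nonpos, add_assoc] at hstep
    simpa only [Nat.cast_succ, add_one_mul] using hstep
  have harg : Tendsto (fun k : ℕ ↦ x + k * h) atTop atTop :=
    tendsto_atTop_add_const_left _ x (tendsto_natCast_atTop_atTop.atTop_mul_const hh)
  simpa using hanti.le_of_tendsto (hlim.comp harg) 0

-- Differencing with an arbitrary second step `δ` trades one derivative for monotonicity, so that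
-- no information on the derivatives of `f` at infinity is needed.
theorem iteratedDeriv_nonneg_of_fwdDiff_nonpos {n : ℕ} (hh : 0 < h)
    (hf : ∀ y > c, ContDiffAt ℝ n f y) (hlim : Tendsto f atTop (𝓝 0))
    (hΔ : ∀ y > c, iteratedDeriv n (Δ_[h] f) y ≤ 0) (hx : c < x) : 0 ≤ iteratedDeriv n f x := by
  induction n generalizing f x with
  | zero =>
    simp only [iteratedDeriv_zero] at hΔ ⊢
    exact le_of_fwdDiff_nonpos_of_tendsto hh hlim hΔ hx
  | succ n ih =>
    have hfn (y) (hy : y > c) : ContDiffAt ℝ n f y := (hf y hy).of_le (by simp)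
    have hshift {t : ℝ} (ht : 0 ≤ t) {m : ℕ∞} {g : ℝ → ℝ} (hg : ∀ y > c, ContDiffAt ℝ m g y)
        (y) (hy : y > c) : ContDiffAt ℝ m (Δ_[t] g) y :=
      ((hg (y + t) (by linarith)).comp y (contDiffAt_id.add contDiffAt_const)).sub (hg y hy)
    have hanti : AntitoneOn (iteratedDeriv n (Δ_[h] f)) (Ioi c) := by
      have hdiff (y) (hy : y > c) : DifferentiableAt ℝ (iteratedDeriv n (Δ_[h] f)) y :=
        differentiableAt_iteratedDeriv (hshift hh.le hf y hy)
      refine antitoneOn_of_deriv_nonpos (convex_Ioi c)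
        (fun y hy ↦ (hdiff y hy).continuousAt.continuousWithinAt)
        (fun y hy ↦ (hdiff y (interior_subset hy)).differentiableWithinAt) fun y hy ↦ ?_
      rw [← iteratedDeriv_succ]
      exact hΔ y (interior_subset hy)
    have hmono : MonotoneOn (iteratedDeriv n f) (Ioi c) := by
      intro y hy z hz hyz
      obtain ⟨δ, hδ, rfl⟩ : ∃ δ, 0 ≤ δ ∧ z = y + δ := ⟨z - y, by linarith, by ring⟩
      have hlimδ : Tendsto (Δ_[δ] f) atTop (𝓝 0) := by
        simpa using! (hlim.comp (tendsto_atTop_add_const_right _ δ tendsto_id)).sub hlim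
      have hΔδ (w) (hw : w > c) : iteratedDeriv n (Δ_[h] (Δ_[δ] f)) w ≤ 0 := by
        have hwδ : c < w + δ := by linarith
        rw [fwdDiff_comm, iteratedDeriv_fwdDiff (hshift hh.le hfn w hw)
          (hshift hh.le hfn (w + δ) hwδ)]
        exact sub_nonpos.2 (hanti hw hwδ (by linarith))
      have hδf := ih (hshift hδ hfn) hlimδ hΔδ hy
      rw [iteratedDeriv_fwdDiff (hfn y hy) (hfn _ hz)] at hδf
      exact sub_nonneg.1 hδf
    rw [iteratedDeriv_succ, ← derivWithin_of_isOpen isOpen_Ioi hx]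
    exact hmono.derivWithin_nonneg

theorem mul_iteratedDeriv_neg_of_mul_fwdDiff_pos {n : ℕ} {ε : ℝ} (hh : 0 < h)
    (hf : ∀ y > c, ContDiffAt ℝ n f y) (hlim : Tendsto f atTop (𝓝 0))
    (hΔ : ∀ y > c, 0 < ε * iteratedDeriv n (Δ_[h] f) y) (hx : c < x) :
    ε * iteratedDeriv n f x < 0 := by
  have hxh : c < x + h := by linarith
  have hnonneg : 0 ≤ iteratedDeriv n ((-ε) • f) (x + h) := by
    refine iteratedDeriv_nonneg_of_fwdDiff_nonpos hh (fun y hy ↦ contDiffAt_const.smul (hf y hy))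
      (by simpa using! hlim.const_smul (-ε)) (fun y hy ↦ ?_) hxh
    rw [fwdDiff_const_smul, iteratedDeriv_const_smul_field, smul_eq_mul]
    linarith [hΔ y hy]
  rw [iteratedDeriv_const_smul_field, smul_eq_mul] at hnonneg
  have hpos := hΔ x hx
  rw [iteratedDeriv_fwdDiff (hf x hx) (hf _ hxh), fwdDiff] at hpos
  linarith

end ForwardDifference

section Digamma

variable {x : ℝ}

theorem analyticAt_log_Gamma (hx : 0 < x) : AnalyticAt ℝ (fun y ↦ log (Gamma y)) x := by
  have hdiff : DifferentiableOn ℂ Complex.Gamma {z | 0 < z.re} := fun z hz ↦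
    (Complex.differentiableAt_Gamma z fun m hm ↦ by
      simp only [mem_ofPred_eq, hm, Complex.neg_re, Complex.natCast_re] at hz
      linarith [m.cast_nonneg (α := ℝ)]).differentiableWithinAt
  have hcomplex : AnalyticAt ℂ Complex.Gamma x :=
    hdiff.analyticAt ((isOpen_lt continuous_const Complex.continuous_re).mem_nhds (by simpa))
  exact hcomplex.re_ofReal.log (Gamma_pos_of_pos hx)

theorem analyticAt_digamma (hx : 0 < x) : AnalyticAt ℝ digamma x :=
  (analyticAt_log_Gamma hx).deriv

theorem hasDerivAt_log_Gamma (hx : 0 < x) : HasDerivAt (fun y ↦ log (Gamma y)) (digamma x) x :=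
  (analyticAt_log_Gamma hx).differentiableAt.hasDerivAt

theorem log_Gamma_add_one (hx : 0 < x) : log (Gamma (x + 1)) = log x + log (Gamma x) := by
  rw [Gamma_add_one hx.ne', log_mul hx.ne' (Gamma_pos_of_pos hx).ne']

theorem digamma_add_one (hx : 0 < x) : digamma (x + 1) = x⁻¹ + digamma x := by
  refine ((hasDerivAt_log_Gamma (by linarith)).comp_add_const x 1).unique
    (((hasDerivAt_log hx.ne').add (hasDerivAt_log_Gamma hx)).congr_of_eventuallyEq ?_)
  filter_upwards [eventually_gt_nhds hx] with y hy using log_Gamma_add_one hy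

theorem slope_log_Gamma_add_one (hx : 0 < x) :
    slope (fun y ↦ log (Gamma y)) x (x + 1) = log x := by
  rw [slope_def_field, log_Gamma_add_one hx]
  ring

theorem log_le_digamma_add_one (hx : 0 < x) : log x ≤ digamma (x + 1) := by
  have hx1 : 0 < x + 1 := by linarith
  rw [← slope_log_Gamma_add_one hx]
  exact convexOn_log_Gamma.slope_le_deriv hx hx1 (lt_add_one x)
    (analyticAt_log_Gamma hx1).differentiableAt

theorem digamma_le_log (hx : 0 < x) : digamma x ≤ log x := by
  have hx1 : 0 < x + 1 := by linarith
  rw [← slope_log_Gamma_add_one hx]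
  exact convexOn_log_Gamma.deriv_le_slope hx hx1 (lt_add_one x)
    (analyticAt_log_Gamma hx).differentiableAt

theorem tendsto_digamma_add_one_sub_log :
    Tendsto (fun t ↦ digamma (t + 1) - log t) atTop (𝓝 0) := by
  refine tendsto_of_tendsto_of_tendsto_of_le_of_le' tendsto_const_nhds
    (tendsto_log_comp_add_sub_log 1) ?_ ?_
  · filter_upwards [eventually_gt_atTop 0] with t ht
    exact sub_nonneg.2 (log_le_digamma_add_one ht)
  · filter_upwards [eventually_gt_atTop 0] with t ht
    exact sub_le_sub_right (digamma_le_log (by linarith)) _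

end Digamma

section LogQuadratic

variable {p : ℝ}

theorem sq_add_self_add_pos (hp : 1 / 4 < p) (x : ℝ) : 0 < x ^ 2 + x + p := by
  nlinarith [sq_nonneg (x + 1 / 2)]

theorem tendsto_log_sq_add_self_add_sub_log (p : ℝ) :
    Tendsto (fun t ↦ log (t ^ 2 + t + p) - 2 * log t) atTop (𝓝 0) := by
  have hratio : Tendsto (fun t : ℝ ↦ 1 + t⁻¹ + p * t⁻¹ ^ 2) atTop (𝓝 1) := by
    have hinv := tendsto_inv_atTop_zero (𝕜 := ℝ)
    simpa using (hinv.const_add 1).add ((hinv.pow 2).const_mul p)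
  have hlog : Tendsto (fun t : ℝ ↦ log (1 + t⁻¹ + p * t⁻¹ ^ 2)) atTop (𝓝 0) := by
    simpa using hratio.log one_ne_zero
  refine hlog.congr' ?_
  filter_upwards [eventually_gt_atTop 0, hratio.eventually_ne one_ne_zero] with t ht hne
  have hfactor : t ^ 2 + t + p = t ^ 2 * (1 + t⁻¹ + p * t⁻¹ ^ 2) := by field_simp
  rw [hfactor, log_mul (by positivity) hne, log_pow]
  push_cast
  ring

theorem hasDerivAt_log_sq_add_self_add (hp : 1 / 4 < p) (x : ℝ) :
    HasDerivAt (fun t ↦ log (t ^ 2 + t + p)) ((2 * x + 1) / (x ^ 2 + x + p)) x := by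
  have hquad : HasDerivAt (fun t ↦ t ^ 2 + t + p) (2 * x + 1) x := by
    simpa using ((hasDerivAt_pow 2 x).fun_add (hasDerivAt_id' x)).add_const p
  exact hquad.log (sq_add_self_add_pos hp x).ne'

theorem sq_add_sq_sub_sq_pos (hp : 1 / 4 < p) (u : ℝ) : 0 < (u ^ 2 + p) ^ 2 - u ^ 2 := by
  have hfactor : (u ^ 2 + p) ^ 2 - u ^ 2 = (u ^ 2 + u + p) * ((-u) ^ 2 + -u + p) := by ring
  rw [hfactor]
  exact mul_pos (sq_add_self_add_pos hp u) (sq_add_self_add_pos hp (-u))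

theorem hasDerivAt_fwdDiff_log_sq_add_self_add (hp : 1 / 4 < p) (x : ℝ) :
    HasDerivAt (Δ_[1] fun t ↦ log (t ^ 2 + t + p))
      (2 * (p - (x + 1) ^ 2) / (((x + 1) ^ 2 + p) ^ 2 - (x + 1) ^ 2)) x := by
  refine (((hasDerivAt_log_sq_add_self_add hp (x + 1)).comp_add_const x 1).sub
    (hasDerivAt_log_sq_add_self_add hp x)).congr_deriv ?_
  have hx := (sq_add_self_add_pos hp x).ne'
  have hx1 := (sq_add_self_add_pos hp (x + 1)).ne'
  have hprod := (sq_add_sq_sub_sq_pos hp (x + 1)).ne'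
  rw [div_sub_div _ _ hx1 hx, div_eq_div_iff (mul_ne_zero hx1 hx) hprod]
  ring

end LogQuadratic

section DigammaError

/-- The weight of the first logarithm in `L`; the second one has weight `1 / 2 - L.weight a`. -/
noncomputable def L.weight (a : ℝ) : ℝ := 1 / (90 * a ^ 2 + 2)

/-- The constant term of the first quadratic in `L`. -/
noncomputable def L.p (a : ℝ) : ℝ := (3 * a + 1) / 3

/-- The constant term of the second quadratic in `L`. -/
noncomputable def L.q (a : ℝ) : ℝ := (15 * a - 1) / (45 * a)

/-- The error `F_a(x) = ψ(x + 1) - L(x, a)` of the approximation of the digamma function. -/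
noncomputable def digammaError (a x : ℝ) : ℝ := digamma (x + 1) - L x a

theorem L_eq (x a : ℝ) : L x a = L.weight a * log (x ^ 2 + x + L.p a) +
    (1 / 2 - L.weight a) * log (x ^ 2 + x + L.q a) := by
  have hweight : 45 * a ^ 2 / (90 * a ^ 2 + 2) = 1 / 2 - L.weight a := by
    rw [L.weight]
    field_simp
    ring
  rw [L, hweight, L.weight, L.p, L.q]

variable {a x : ℝ}

theorem L.one_fourth_lt_p (ha : 4 / 15 < a) : 1 / 4 < L.p a := by
  rw [L.p]
  linarith

theorem L.one_fourth_lt_q (ha : 4 / 15 < a) : 1 / 4 < L.q a := by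
  rw [L.q, lt_div_iff₀ (by linarith)]
  linarith

theorem L.weight_mul_p_sub_q (ha : a ≠ 0) :
    2 * L.weight a * (L.p a - L.q a) = 1 / 3 - L.q a := by
  rw [L.weight, L.p, L.q]
  field_simp
  ring

theorem L.p_mul_q (ha : a ≠ 0) : L.p a * L.q a = (L.p a + L.q a) / 3 - 2 / 15 := by
  rw [L.p, L.q]
  field_simp
  ring

theorem tendsto_digammaError (a : ℝ) : Tendsto (digammaError a) atTop (𝓝 0) := by
  have hlim := tendsto_digamma_add_one_sub_log.sub
    (((tendsto_log_sq_add_self_add_sub_log (L.p a)).const_mul (L.weight a)).add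
      ((tendsto_log_sq_add_self_add_sub_log (L.q a)).const_mul (1 / 2 - L.weight a)))
  simp only [mul_zero, add_zero, sub_zero] at hlim
  refine hlim.congr fun t ↦ ?_
  rw [digammaError, L_eq]
  ring

theorem analyticAt_digammaError (ha : 4 / 15 < a) (hx : -1 < x) :
    AnalyticAt ℝ (digammaError a) x := by
  have hdigamma : AnalyticAt ℝ (fun t ↦ digamma (t + 1)) x :=
    AnalyticAt.fun_comp (f := fun t ↦ t + 1) (analyticAt_digamma (by linarith)) (by fun_prop)
  have hlog {p : ℝ} (hp : 1 / 4 < p) : AnalyticAt ℝ (fun t ↦ log (t ^ 2 + t + p)) x :=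
    AnalyticAt.log (by fun_prop) (sq_add_self_add_pos hp x)
  have heq : digammaError a = fun t ↦ digamma (t + 1) -
      (L.weight a * log (t ^ 2 + t + L.p a) + (1 / 2 - L.weight a) * log (t ^ 2 + t + L.q a)) := by
    ext t
    rw [digammaError, L_eq]
  rw [heq]
  exact hdigamma.fun_sub
    ((analyticAt_const.fun_mul (hlog (L.one_fourth_lt_p ha))).fun_add
      (analyticAt_const.fun_mul (hlog (L.one_fourth_lt_q ha))))

theorem fwdDiff_digammaError (hx : -1 < x) :
    Δ_[1] (digammaError a) x = (x + 1)⁻¹ -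
      (L.weight a * Δ_[1] (fun t ↦ log (t ^ 2 + t + L.p a)) x +
        (1 / 2 - L.weight a) * Δ_[1] (fun t ↦ log (t ^ 2 + t + L.q a)) x) := by
  simp only [fwdDiff, digammaError, L_eq, digamma_add_one (neg_lt_iff_pos_add.1 hx)]
  ring

-- The relations `hA` and `hpq`, which parametrize `L(·, a)`, say that the `v ^ 3` and `v ^ 2` terms
-- of the numerator vanish.
theorem one_div_add_weighted_eq {A p q v : ℝ} (hA : 2 * A * (p - q) = 1 / 3 - q)
    (hpq : p * q = (p + q) / 3 - 2 / 15) (hv : v ≠ 0) (hP : (v + p) ^ 2 - v ≠ 0)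
    (hQ : (v + q) ^ 2 - v ≠ 0) :
    1 / v + (A * (2 * (p - v) / ((v + p) ^ 2 - v)) +
        (1 / 2 - A) * (2 * (q - v) / ((v + q) ^ 2 - v))) =
      ((7 * (p + q) - 10) / 45 * v + (p * q) ^ 2) /
        (v * ((v + p) ^ 2 - v) * ((v + q) ^ 2 - v)) := by
  have hnum : ((v + p) ^ 2 - v) * ((v + q) ^ 2 - v) +
      v * (2 * A * (p - v) * ((v + q) ^ 2 - v) + (1 - 2 * A) * (q - v) * ((v + p) ^ 2 - v)) =
      (7 * (p + q) - 10) / 45 * v + (p * q) ^ 2 := by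
    linear_combination v * (3 * v ^ 2 - v + v * (p + q) - p * q) * hA +
      (5 * v ^ 2 + v * (3 * (p + q) + 5 / 3)) * hpq
  rw [← hnum]
  field_simp

theorem hasDerivAt_fwdDiff_digammaError (ha : 4 / 15 < a) (hx : -1 < x) :
    HasDerivAt (Δ_[1] (digammaError a))
      (-(((7 * (L.p a + L.q a) - 10) / 45 * (x + 1) ^ 2 + (L.p a * L.q a) ^ 2) /
        ((x + 1) ^ 2 * (((x + 1) ^ 2 + L.p a) ^ 2 - (x + 1) ^ 2) *
          (((x + 1) ^ 2 + L.q a) ^ 2 - (x + 1) ^ 2)))) x := by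
  have hu : x + 1 ≠ 0 := by linarith
  have hp := L.one_fourth_lt_p ha
  have hq := L.one_fourth_lt_q ha
  have hinv : HasDerivAt (fun t ↦ (t + 1)⁻¹) (-1 / (x + 1) ^ 2) x :=
    ((hasDerivAt_id' x).add_const 1).fun_inv hu
  rw [← one_div_add_weighted_eq (L.weight_mul_p_sub_q (by linarith)) (L.p_mul_q (by linarith))
    (pow_ne_zero 2 hu) (sq_add_sq_sub_sq_pos hp (x + 1)).ne' (sq_add_sq_sub_sq_pos hq (x + 1)).ne']
  refine (((hinv.fun_sub
    (((hasDerivAt_fwdDiff_log_sq_add_self_add hp x).const_mul (L.weight a)).fun_add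
      ((hasDerivAt_fwdDiff_log_sq_add_self_add hq x).const_mul (1 / 2 - L.weight a))))
    ).congr_of_eventuallyEq ?_).congr_deriv (by ring)
  filter_upwards [eventually_gt_nhds hx] with t ht using fwdDiff_digammaError ht

end DigammaError

section Reciprocal

variable {u : ℝ}

theorem iteratedDeriv_two_inv_eval {P : ℝ[X]} (hP : P.eval u ≠ 0) :
    iteratedDeriv 2 (fun t ↦ (P.eval t)⁻¹) u =
      (2 * P.derivative.eval u ^ 2 - P.eval u * P.derivative.derivative.eval u) /
        P.eval u ^ 3 := by
  have hderiv : deriv (fun t ↦ (P.eval t)⁻¹) =ᶠ[𝓝 u]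
      fun t ↦ -P.derivative.eval t / P.eval t ^ 2 := by
    filter_upwards [P.continuousAt.eventually_ne hP] with t ht
    exact ((P.hasDerivAt t).fun_inv ht).deriv
  rw [iteratedDeriv_succ, iteratedDeriv_one, hderiv.deriv_eq]
  refine ((((P.derivative.hasDerivAt u).fun_neg).fun_div ((P.hasDerivAt u).fun_pow 2)
    (pow_ne_zero 2 hP)).congr_deriv ?_).deriv
  field_simp
  ring

theorem neg_one_pow_mul_iteratedDeriv_inv_eval_pos {P : ℝ[X]} (h₀ : 0 < P.eval u)
    (h₁ : 0 < P.derivative.eval u)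
    (h₂ : 0 < 2 * P.derivative.eval u ^ 2 - P.eval u * P.derivative.derivative.eval u)
    {n : ℕ} (hn : n ≤ 2) : 0 < (-1) ^ n * iteratedDeriv n (fun t ↦ (P.eval t)⁻¹) u := by
  interval_cases n
  · simpa using h₀
  · rw [iteratedDeriv_one, ((P.hasDerivAt u).fun_inv h₀.ne').deriv, pow_one, neg_one_mul,
      neg_div, neg_neg]
    positivity
  · rw [iteratedDeriv_two_inv_eval h₀.ne', neg_one_sq, one_mul]
    positivity

end Reciprocal

section CriticalParameter

/-- For the critical parameter, the derivative of `Δ_[1] F_a` at `x` is `-144` divided by the value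
of this polynomial at `x + 1`. -/
noncomputable def criticalDenominator : ℝ[X] :=
  1225 * X ^ 10 + 1050 * X ^ 8 + 1065 * X ^ 6 - 460 * X ^ 4 + 144 * X ^ 2

theorem eval_criticalDenominator (u : ℝ) : criticalDenominator.eval u =
    1225 * u ^ 10 + 1050 * u ^ 8 + 1065 * u ^ 6 - 460 * u ^ 4 + 144 * u ^ 2 := by
  simp [criticalDenominator]

theorem eval_derivative_criticalDenominator (u : ℝ) : criticalDenominator.derivative.eval u =
    12250 * u ^ 9 + 8400 * u ^ 7 + 6390 * u ^ 5 - 1840 * u ^ 3 + 288 * u := by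
  simp only [criticalDenominator, derivative_sub, derivative_mul,
    derivative_ofNat, zero_mul, zero_add, derivative_X_pow_succ, Nat.cast_ofNat, Nat.cast_one,
    map_add, map_one, pow_one, eval_add, eval_sub, eval_mul, eval_ofNat, eval_C, eval_one, eval_pow,
    eval_X]
  ring

theorem eval_derivative_derivative_criticalDenominator (u : ℝ) :
    criticalDenominator.derivative.derivative.eval u =
      110250 * u ^ 8 + 58800 * u ^ 6 + 31950 * u ^ 4 - 5520 * u ^ 2 + 288 := by
  simp only [criticalDenominator, derivative_sub, derivative_mul,
    derivative_ofNat, zero_mul, zero_add, derivative_X_pow_succ, Nat.cast_ofNat, Nat.cast_one,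
    map_add, map_one, pow_one, derivative_C, derivative_one, add_zero, derivative_X, mul_one,
    eval_add, eval_sub, eval_mul, eval_ofNat, eval_C, eval_one, eval_pow, eval_X]
  ring

variable {a u x : ℝ}

theorem eval_criticalDenominator_pos (hu : 0 < u) : 0 < criticalDenominator.eval u := by
  have hquad : 0 < 1065 * (u ^ 2) ^ 2 - 460 * u ^ 2 + 144 := by
    nlinarith [sq_nonneg (u ^ 2 - 46 / 213)]
  calc 0 < 1225 * u ^ 10 + 1050 * u ^ 8 + u ^ 2 * (1065 * (u ^ 2) ^ 2 - 460 * u ^ 2 + 144) := by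
        positivity
    _ = criticalDenominator.eval u := by rw [eval_criticalDenominator]; ring

theorem eval_derivative_criticalDenominator_pos (hu : 0 < u) :
    0 < criticalDenominator.derivative.eval u := by
  have hquad : 0 < 6390 * (u ^ 2) ^ 2 - 1840 * u ^ 2 + 288 := by
    nlinarith [sq_nonneg (u ^ 2 - 92 / 639)]
  calc 0 < 12250 * u ^ 9 + 8400 * u ^ 7 + u * (6390 * (u ^ 2) ^ 2 - 1840 * u ^ 2 + 288) := by
        positivity
    _ = criticalDenominator.derivative.eval u := by
        rw [eval_derivative_criticalDenominator]; ring

theorem criticalDenominator_inv_convexity_pos (hu : 0 < u) :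
    0 < 2 * criticalDenominator.derivative.eval u ^ 2 -
      criticalDenominator.eval u * criticalDenominator.derivative.derivative.eval u := by
  obtain ⟨v, hv, hvu⟩ : ∃ v, 0 < v ∧ v = u ^ 2 := ⟨u ^ 2, by positivity, rfl⟩
  -- The square `(1 - 5 * v) ^ 2` below absorbs the negative linear term in `v`; the minimum of the
  -- remaining quartic is also near `v = 1 / 5`.
  have hquartic : 0 < 3704960 - 25547400 * v + 16540650 * v ^ 2 + 85851500 * v ^ 3 +
      235935000 * v ^ 4 := by
    nlinarith [mul_nonneg hv.le (sq_nonneg (v - 1 / 5)), sq_nonneg (v ^ 2 - 1 / 25),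
      sq_nonneg (v - 1 / 5)]
  calc 0 < v * (5184 + 119232 * (1 - 5 * v) ^ 2 + v ^ 2 * (3704960 - 25547400 * v +
          16540650 * v ^ 2 + 85851500 * v ^ 3 + 235935000 * v ^ 4) +
          223807500 * v ^ 7 + 165068750 * v ^ 8) := by positivity
    _ = _ := by
        rw [eval_criticalDenominator, eval_derivative_criticalDenominator,
          eval_derivative_derivative_criticalDenominator, hvu]
        ring

theorem L.p_add_q_of_root (ha₀ : a ≠ 0) (ha : 315 * a ^ 2 - 240 * a - 7 = 0) :
    L.p a + L.q a = 10 / 7 := by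
  rw [L.p, L.q]
  field_simp
  linear_combination 3 * ha

theorem add_sq_sub_mul_add_sq_sub (p q v : ℝ) : ((v + p) ^ 2 - v) * ((v + q) ^ 2 - v) =
    v ^ 4 + 2 * (p + q - 1) * v ^ 3 + ((p + q - 1) ^ 2 + 2 * (p * q)) * v ^ 2 +
      (2 * (p * q) * (p + q + 1) - (p + q) ^ 2) * v + (p * q) ^ 2 := by
  ring

theorem hasDerivAt_fwdDiff_digammaError_of_root (ha₀ : 4 / 15 < a)
    (ha : 315 * a ^ 2 - 240 * a - 7 = 0) (hx : -1 < x) :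
    HasDerivAt (Δ_[1] (digammaError a)) (-144 * (criticalDenominator.eval (x + 1))⁻¹) x := by
  have ha_ne : a ≠ 0 := by linarith
  have hsum : L.p a + L.q a = 10 / 7 := L.p_add_q_of_root ha_ne ha
  have hmul : L.p a * L.q a = 12 / 35 := by rw [L.p_mul_q ha_ne, hsum]; norm_num
  have heval : criticalDenominator.eval (x + 1) = 1225 * ((x + 1) ^ 2 *
      (((x + 1) ^ 2 + L.p a) ^ 2 - (x + 1) ^ 2) * (((x + 1) ^ 2 + L.q a) ^ 2 - (x + 1) ^ 2)) := by
    rw [eval_criticalDenominator, mul_assoc, add_sq_sub_mul_add_sq_sub, hsum, hmul]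
    ring
  refine (hasDerivAt_fwdDiff_digammaError ha₀ hx).congr_deriv ?_
  rw [heval, hsum, hmul]
  field_simp
  norm_num

theorem neg_one_pow_mul_iteratedDeriv_fwdDiff_digammaError_pos (ha₀ : 4 / 15 < a)
    (ha : 315 * a ^ 2 - 240 * a - 7 = 0) {n : ℕ} (hn₁ : 1 ≤ n) (hn₃ : n ≤ 3) (hx : -1 < x) :
    0 < (-1) ^ n * iteratedDeriv n (Δ_[1] (digammaError a)) x := by
  obtain ⟨m, rfl⟩ := Nat.exists_eq_add_of_le' hn₁
  have hu : 0 < x + 1 := by linarith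
  have hderiv : deriv (Δ_[1] (digammaError a)) =ᶠ[𝓝 x]
      fun t ↦ -144 * (criticalDenominator.eval (t + 1))⁻¹ := by
    filter_upwards [eventually_gt_nhds hx] with t ht
    exact (hasDerivAt_fwdDiff_digammaError_of_root ha₀ ha ht).deriv
  have hsign := neg_one_pow_mul_iteratedDeriv_inv_eval_pos (eval_criticalDenominator_pos hu)
    (eval_derivative_criticalDenominator_pos hu) (criticalDenominator_inv_convexity_pos hu)
    (Nat.le_of_succ_le_succ hn₃)
  rw [iteratedDeriv_succ', hderiv.iteratedDeriv_eq, iteratedDeriv_const_mul_field,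
    iteratedDeriv_comp_add_const m (fun t ↦ (criticalDenominator.eval t)⁻¹), pow_succ]
  linarith

theorem neg_one_pow_mul_iteratedDeriv_digammaError_neg (ha₀ : 4 / 15 < a)
    (ha : 315 * a ^ 2 - 240 * a - 7 = 0) {n : ℕ} (hn₁ : 1 ≤ n) (hn₃ : n ≤ 3) (hx : -1 < x) :
    (-1) ^ n * iteratedDeriv n (digammaError a) x < 0 :=
  mul_iteratedDeriv_neg_of_mul_fwdDiff_pos one_pos
    (fun _ hy ↦ (analyticAt_digammaError ha₀ hy).contDiffAt) (tendsto_digammaError a)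
    (fun _ hy ↦ neg_one_pow_mul_iteratedDeriv_fwdDiff_digammaError_pos ha₀ ha hn₁ hn₃ hy) hx

end CriticalParameter

/-- With a₁ = (40 + 3√205)/105 and F(x) = ψ(x+1) − L(x,a₁), one has
(−1)ⁿ·F⁽ⁿ⁾(x) < 0 for all x > −1 and n ∈ {1,2,3}. -/
theorem stmt_3 (x : ℝ) (hx : -1 < x) :
    ∀ n ∈ ({1, 2, 3} : Set ℕ),
      (-1 : ℝ) ^ n *
        iteratedDeriv n (fun t : ℝ => digamma (t + 1) - L t ((40 + 3 * Real.sqrt 205) / 105)) x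
        < 0 := by
  intro n hn
  have hsq : √205 ^ 2 = 205 := sq_sqrt (by norm_num)
  have hroot_pos : 0 ≤ √205 := sqrt_nonneg _
  have hn_mem : 1 ≤ n ∧ n ≤ 3 := by
    rcases hn with rfl | rfl | rfl <;> norm_num
  exact neg_one_pow_mul_iteratedDeriv_digammaError_neg (by linarith)
    (by linear_combination 9 / 35 * hsq) hn_mem.1 hn_mem.2 hx
end

section
/- For all x > -1/2, one has ψ'(x + 1/2) > 20x(84x² + 71)/(1680x⁴ + 1560x² + 81). -/
open Real Filter Set

/-!
Since `ψ'(t) - ψ'(t + 1) = 1 / t²` and `ψ'` is nonnegative near `+∞` (log-convexity of `Γ`), a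
sequence tending to `0` whose `n`-th decrement is smaller than `1 / (t + n)²` starts below `ψ'(t)`.
The rational function `R` of the theorem gives such a sequence along `x, x + 1, …`, where
`t = x + 1/2`: with `D` its denominator, the defect `1 / t² - (R(x) - R(x + 1))` collapses to
`576² / (t² D(x) D(x + 1))`.
-/

open scoped Topology

section Digamma

variable {t : ℝ}

lemma forall_ne_neg_natCast_of_pos (ht : 0 < t) (m : ℕ) : t ≠ -m :=
  ((neg_nonpos.mpr m.cast_nonneg).trans_lt ht).ne'

lemma add_natCast_ne_neg_natCast (ht : ∀ m : ℕ, t ≠ -m) (n m : ℕ) : t + n ≠ -m := by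
  intro h
  apply ht (n + m)
  push_cast
  linarith

lemma eventually_forall_ne_neg_natCast (ht : ∀ m : ℕ, t ≠ -m) :
    ∀ᶠ y : ℝ in 𝓝 t, ∀ m : ℕ, y ≠ -m := by
  have hGamma : ∀ᶠ y in 𝓝 t, Gamma y ≠ 0 :=
    (differentiableAt_Gamma ht).continuousAt.eventually_ne (Gamma_ne_zero ht)
  filter_upwards [hGamma] with y hy m hm
  exact hy ((Gamma_eq_zero_iff y).mpr ⟨m, hm⟩)

lemma analyticAt_Gamma (ht : ∀ m : ℕ, t ≠ -m) : AnalyticAt ℝ Gamma t := by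
  have hGamma : Complex.Gamma t ≠ 0 := by
    rw [Complex.Gamma_ofReal]
    exact_mod_cast Gamma_ne_zero ht
  have hInv : AnalyticAt ℂ (fun s => (Complex.Gamma s)⁻¹⁻¹) t :=
    (Complex.differentiable_one_div_Gamma.analyticAt t).fun_inv (inv_ne_zero hGamma)
  simp only [inv_inv] at hInv
  exact hInv.re_ofReal

lemma analyticAt_log_Gamma_s4 (ht : ∀ m : ℕ, t ≠ -m) :
    AnalyticAt ℝ (fun y => log (Gamma y)) t :=
  ((analyticAt_Gamma ht).contDiffAt.log (Gamma_ne_zero ht)).analyticAt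

lemma analyticAt_digamma_s4 (ht : ∀ m : ℕ, t ≠ -m) : AnalyticAt ℝ digamma t :=
  (analyticAt_log_Gamma_s4 ht).deriv

lemma digamma_add_one_s4 (ht : ∀ m : ℕ, t ≠ -m) : digamma (t + 1) = digamma t + t⁻¹ := by
  have ht₀ : t ≠ 0 := by simpa using ht 0
  have hlog : (fun y => log (Gamma (y + 1))) =ᶠ[𝓝 t] fun y => log (Gamma y) + log y := by
    filter_upwards [eventually_forall_ne_neg_natCast ht] with y hy
    have hy₀ : y ≠ 0 := by simpa using hy 0
    rw [Gamma_add_one hy₀, log_mul hy₀ (Gamma_ne_zero hy), add_comm]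
  calc digamma (t + 1) = deriv (fun y => log (Gamma (y + 1))) t :=
        (deriv_comp_add_const (f := fun y => log (Gamma y)) ..).symm
    _ = deriv (fun y => log (Gamma y) + log y) t := hlog.deriv_eq
    _ = digamma t + t⁻¹ := by
        rw [deriv_fun_add (analyticAt_log_Gamma_s4 ht).differentiableAt (differentiableAt_log ht₀),
          deriv_log, digamma]

lemma deriv_digamma_add_one (ht : ∀ m : ℕ, t ≠ -m) :
    deriv digamma (t + 1) = deriv digamma t - 1 / t ^ 2 := by
  have ht₀ : t ≠ 0 := by simpa using ht 0
  have hrec : (fun y => digamma (y + 1)) =ᶠ[𝓝 t] fun y => digamma y + y⁻¹ := by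
    filter_upwards [eventually_forall_ne_neg_natCast ht] with y hy using digamma_add_one_s4 hy
  rw [← deriv_comp_add_const, hrec.deriv_eq,
    deriv_fun_add (analyticAt_digamma_s4 ht).differentiableAt (differentiableAt_inv ht₀), deriv_inv,
    one_div, sub_eq_add_neg]

lemma monotoneOn_digamma : MonotoneOn digamma (Ioi 0) :=
  convexOn_log_Gamma.monotoneOn_deriv fun _ hy =>
    (analyticAt_log_Gamma_s4 (forall_ne_neg_natCast_of_pos hy)).differentiableAt

lemma deriv_digamma_nonneg (ht : 0 < t) : 0 ≤ deriv digamma t := by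
  rw [← derivWithin_of_isOpen isOpen_Ioi ht]
  exact monotoneOn_digamma.derivWithin_nonneg

theorem lt_deriv_digamma_of_sub_lt (ht : ∀ m : ℕ, t ≠ -m) {f : ℕ → ℝ}
    (hf : ∀ n : ℕ, f n - f (n + 1) < 1 / (t + n) ^ 2) (hlim : Tendsto f atTop (𝓝 0)) :
    f 0 < deriv digamma t := by
  have hanti : StrictAnti fun n : ℕ => deriv digamma (t + n) - f n := by
    refine strictAnti_nat_of_succ_lt fun n => ?_
    have hrec := deriv_digamma_add_one (add_natCast_ne_neg_natCast ht n)
    rw [Nat.cast_add_one, ← add_assoc, hrec]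
    linarith [hf n]
  have hpos : ∀ᶠ n : ℕ in atTop, 0 < t + n :=
    (tendsto_atTop_add_const_left _ t tendsto_natCast_atTop_atTop).eventually_gt_atTop 0
  have hlim_neg : Tendsto (fun n => -f n) atTop (𝓝 0) := by simpa using hlim.neg
  have hone : 0 ≤ deriv digamma (t + (1 : ℕ)) - f 1 := by
    refine le_of_tendsto hlim_neg ?_
    filter_upwards [hpos, eventually_ge_atTop 1] with n hn hn₁
    linarith [deriv_digamma_nonneg hn, hanti.antitone hn₁]
  have hzero := hanti zero_lt_one
  simp only [Nat.cast_zero, add_zero] at hzero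
  linarith

end Digamma

/-- The rational minorant of the trigamma function `ψ'`, in the variable `x = t - 1/2` centred so
that it is odd. -/
noncomputable def trigammaMinorant (x : ℝ) : ℝ :=
  20 * x * (84 * x ^ 2 + 71) / (1680 * x ^ 4 + 1560 * x ^ 2 + 81)

lemma trigammaMinorant_sub_add_one {x : ℝ} (hx : x + 1 / 2 ≠ 0) :
    trigammaMinorant x - trigammaMinorant (x + 1) = 1 / (x + 1 / 2) ^ 2 -
      576 ^ 2 / ((x + 1 / 2) ^ 2 * (1680 * x ^ 4 + 1560 * x ^ 2 + 81) *
        (1680 * (x + 1) ^ 4 + 1560 * (x + 1) ^ 2 + 81)) := by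
  have hD : 1680 * x ^ 4 + 1560 * x ^ 2 + 81 ≠ 0 := by positivity
  have hD₁ : 1680 * (x + 1) ^ 4 + 1560 * (x + 1) ^ 2 + 81 ≠ 0 := by positivity
  unfold trigammaMinorant
  rw [div_sub_div _ _ hD hD₁, div_sub_div _ _ (by positivity) (by positivity),
    div_eq_div_iff (by positivity) (by positivity)]
  ring

lemma trigammaMinorant_sub_add_one_lt {x : ℝ} (hx : x + 1 / 2 ≠ 0) :
    trigammaMinorant x - trigammaMinorant (x + 1) < 1 / (x + 1 / 2) ^ 2 := by
  rw [trigammaMinorant_sub_add_one hx]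
  exact sub_lt_self _ (by positivity)

lemma trigammaMinorant_nonneg {x : ℝ} (hx : 0 ≤ x) : 0 ≤ trigammaMinorant x := by
  unfold trigammaMinorant
  positivity

lemma trigammaMinorant_le_inv {x : ℝ} (hx : 0 < x) : trigammaMinorant x ≤ x⁻¹ := by
  rw [trigammaMinorant, inv_eq_one_div, div_le_div_iff₀ (by positivity) hx]
  nlinarith [sq_nonneg x]

lemma tendsto_trigammaMinorant_atTop : Tendsto trigammaMinorant atTop (𝓝 0) := by
  refine squeeze_zero' ?_ ?_ tendsto_inv_atTop_zero
  · filter_upwards [eventually_ge_atTop 0] with x hx using trigammaMinorant_nonneg hx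
  · filter_upwards [eventually_gt_atTop 0] with x hx using trigammaMinorant_le_inv hx

theorem stmt_4_general (x : ℝ) (hx : ∀ m : ℕ, x + 1 / 2 ≠ -m) :
    20 * x * (84 * x ^ 2 + 71) / (1680 * x ^ 4 + 1560 * x ^ 2 + 81) <
      deriv digamma (x + 1 / 2) := by
  have hdecr (n : ℕ) : trigammaMinorant (x + n) - trigammaMinorant (x + (n + 1 : ℕ)) <
      1 / (x + 1 / 2 + n) ^ 2 := by
    have hne : x + n + 1 / 2 ≠ 0 := by
      simpa [add_right_comm] using add_natCast_ne_neg_natCast hx n 0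
    rw [Nat.cast_add_one, ← add_assoc, add_right_comm x (1 / 2)]
    exact trigammaMinorant_sub_add_one_lt hne
  have hlim : Tendsto (fun n : ℕ => trigammaMinorant (x + n)) atTop (𝓝 0) :=
    tendsto_trigammaMinorant_atTop.comp
      (tendsto_atTop_add_const_left _ x tendsto_natCast_atTop_atTop)
  simpa [trigammaMinorant] using lt_deriv_digamma_of_sub_lt hx hdecr hlim

/-- For all x > −1/2, ψ'(x + 1/2) > 20x(84x² + 71)/(1680x⁴ + 1560x² + 81). -/
theorem stmt_4 (x : ℝ) (hx : -(1 / 2) < x) :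
    deriv digamma (x + 1 / 2) >
      20 * x * (84 * x ^ 2 + 71) / (1680 * x ^ 4 + 1560 * x ^ 2 + 81) :=
  stmt_4_general x (forall_ne_neg_natCast_of_pos (by linarith))
end

section
/- For all x > -1/2, one has ψ''(x + 1/2) < −(20/3)·(47040x⁶ + 75600x⁴ + 30116x² − 1917)/(560x⁴ + 520x² + 27)². -/
open Real Filter Set

/-!
Put `y = x + 1 / 2`. The bound is the derivative at `y` of a rational approximant `S` to `ψ'`.
Since `ψ' (y + 1) = ψ' y - 1 / y ^ 2` while `S (y + 1) = S y - 1 / y ^ 2 + 192 ^ 2 / Q y` with a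
polynomial `Q` that is increasing on `(0, ∞)`, the difference `S' - ψ''` strictly decreases along
`y, y + 1, y + 2, …`. As `ψ'' ≤ 0` and `S'` vanishes at infinity, it is therefore positive at `y`.

The inequality `ψ'' ≤ 0` comes from Gauss's limit `ψ y = lim (log n - ∑ k < n, 1 / (y + k))`, which
exhibits `ψ` as a limit of concave functions; the limit itself follows from the convexity of
`log ∘ Γ`, which traps `ψ y` between `log y - 1 / y` and `log y`.
-/

open scoped Topology

theorem lt_of_strictAnti_of_tendsto_of_eventuallyLE {ι α : Type*} [PartialOrder ι]
    [IsDirectedOrder ι] [NoMaxOrder ι] [TopologicalSpace α] [Preorder α] [OrderClosedTopology α]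
    {u v : ι → α} {a : α} (hu : StrictAnti u) (hv : Tendsto v atTop (𝓝 a))
    (hvu : v ≤ᶠ[atTop] u) (i : ι) : a < u i := by
  have : Nonempty ι := ⟨i⟩
  obtain ⟨j, hij⟩ := exists_gt i
  have hvj : ∀ᶠ k in atTop, v k ≤ u j := by
    filter_upwards [hvu, eventually_ge_atTop j] with k hk hjk
    exact hk.trans (hu.antitone hjk)
  exact (le_of_tendsto hv hvj).trans_lt (hu hij)

theorem convexOn_inv_add_const {𝕜 : Type*} [Field 𝕜] [LinearOrder 𝕜] [IsStrictOrderedRing 𝕜]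
    (c : 𝕜) : ConvexOn 𝕜 (Ioi (-c)) fun x => (x + c)⁻¹ := by
  have hinv : ConvexOn 𝕜 (Ioi 0) fun x : 𝕜 => x⁻¹ := by simpa using convexOn_zpow (𝕜 := 𝕜) (-1)
  simpa [Function.comp_def] using hinv.translate_left c

theorem concaveOn_of_tendsto {ι 𝕜 E β : Type*} [Semiring 𝕜] [PartialOrder 𝕜] [AddCommMonoid E]
    [SMul 𝕜 E] [AddCommMonoid β] [PartialOrder β] [SMul 𝕜 β] [TopologicalSpace β]
    [OrderClosedTopology β] [ContinuousAdd β] [ContinuousConstSMul 𝕜 β] {l : Filter ι} [l.NeBot]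
    {s : Set E} {f : ι → E → β} {g : E → β} (hf : ∀ᶠ i in l, ConcaveOn 𝕜 s (f i))
    (hfg : ∀ x ∈ s, Tendsto (fun i => f i x) l (𝓝 (g x))) : ConcaveOn 𝕜 s g := by
  obtain ⟨_, hs, -⟩ := hf.exists
  refine ⟨hs, fun x hx y hy a b ha hb hab => ?_⟩
  refine le_of_tendsto_of_tendsto (((hfg x hx).const_smul a).add ((hfg y hy).const_smul b))
    (hfg _ (hs hx hy ha hb hab)) ?_
  filter_upwards [hf] with i hi
  exact hi.2 hx hy ha hb hab

theorem deriv_add_const_eq_of_eventually {𝕜 F : Type*} [NontriviallyNormedField 𝕜]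
    [NormedAddCommGroup F] [NormedSpace 𝕜 F] {f g : 𝕜 → F} {x c : 𝕜}
    (h : ∀ᶠ z in 𝓝 x, f (z + c) = f z + g z) (hf : DifferentiableAt 𝕜 f x)
    (hg : DifferentiableAt 𝕜 g x) : deriv f (x + c) = deriv f x + deriv g x := by
  rw [← deriv_comp_add_const, EventuallyEq.deriv_eq h, deriv_fun_add hf hg]

theorem hasDerivAt_neg_sq_inv {𝕜 : Type*} [NontriviallyNormedField 𝕜] {x : 𝕜} (hx : x ≠ 0) :
    HasDerivAt (fun z : 𝕜 => -(z ^ 2)⁻¹) (2 / x ^ 3) x := by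
  refine (((hasDerivAt_pow 2 x).inv (pow_ne_zero 2 hx)).neg).congr_deriv ?_
  push_cast
  field_simp

theorem analyticAt_complexGamma {s : ℂ} (hs : ∀ m : ℕ, s ≠ -m) : AnalyticAt ℂ Complex.Gamma s := by
  have h := (Complex.differentiable_one_div_Gamma.analyticAt s).inv
    (inv_ne_zero (Complex.Gamma_ne_zero hs))
  simpa only [Pi.inv_def, inv_inv] using h

theorem analyticAt_realGamma {x : ℝ} (hx : ∀ m : ℕ, x ≠ -m) : AnalyticAt ℝ Real.Gamma x :=
  (analyticAt_complexGamma fun m => by exact_mod_cast hx m).re_ofReal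

theorem analyticAt_log_Gamma_s5 {y : ℝ} (hy : 0 < y) :
    AnalyticAt ℝ (fun z => Real.log (Real.Gamma z)) y :=
  (analyticAt_realGamma fun m => ((neg_nonpos.2 m.cast_nonneg).trans_lt hy).ne').log
    (Real.Gamma_pos_of_pos hy)

theorem log_Gamma_add_one_s5 {y : ℝ} (hy : 0 < y) :
    Real.log (Real.Gamma (y + 1)) = Real.log (Real.Gamma y) + Real.log y := by
  rw [Real.Gamma_add_one hy.ne', Real.log_mul hy.ne' (Real.Gamma_pos_of_pos hy).ne', add_comm]

theorem analyticAt_digamma_s5 {y : ℝ} (hy : 0 < y) : AnalyticAt ℝ digamma y :=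
  (analyticAt_log_Gamma_s5 hy).deriv

theorem digamma_add_one_s5 {y : ℝ} (hy : 0 < y) : digamma (y + 1) = digamma y + y⁻¹ := by
  rw [← Real.deriv_log]
  refine deriv_add_const_eq_of_eventually ?_ (analyticAt_log_Gamma_s5 hy).differentiableAt
    (Real.differentiableAt_log hy.ne')
  filter_upwards [lt_mem_nhds hy] with z hz using log_Gamma_add_one_s5 hz

theorem deriv_digamma_add_one_s5 {y : ℝ} (hy : 0 < y) :
    deriv digamma (y + 1) = deriv digamma y + -(y ^ 2)⁻¹ := by
  rw [← deriv_inv]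
  refine deriv_add_const_eq_of_eventually ?_ (analyticAt_digamma_s5 hy).differentiableAt
    (differentiableAt_inv hy.ne')
  filter_upwards [lt_mem_nhds hy] with z hz using digamma_add_one_s5 hz

theorem deriv_deriv_digamma_add_one {y : ℝ} (hy : 0 < y) :
    deriv (deriv digamma) (y + 1) = deriv (deriv digamma) y + 2 / y ^ 3 := by
  have hinv := hasDerivAt_neg_sq_inv hy.ne'
  rw [← hinv.deriv]
  refine deriv_add_const_eq_of_eventually ?_ (analyticAt_digamma_s5 hy).deriv.differentiableAt
    hinv.differentiableAt
  filter_upwards [lt_mem_nhds hy] with z hz using deriv_digamma_add_one_s5 hz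

theorem digamma_add_natCast {y : ℝ} (hy : 0 < y) (n : ℕ) :
    digamma (y + n) = digamma y + ∑ k ∈ Finset.range n, (y + k)⁻¹ := by
  induction n with
  | zero => simp
  | succ n ih =>
    rw [Finset.sum_range_succ, ← add_assoc, ← ih, ← digamma_add_one_s5 (by positivity), add_assoc,
      Nat.cast_succ]

theorem digamma_le_log_s5 {y : ℝ} (hy : 0 < y) : digamma y ≤ Real.log y := by
  have hy1 : 0 < y + 1 := by positivity
  refine (Real.convexOn_log_Gamma.deriv_le_slope hy hy1 (lt_add_one y)
    (analyticAt_log_Gamma_s5 hy).differentiableAt).trans_eq ?_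
  simp [slope_def_field, log_Gamma_add_one_s5 hy]

theorem log_le_digamma_add_one_s5 {y : ℝ} (hy : 0 < y) : Real.log y ≤ digamma (y + 1) := by
  have hy1 : 0 < y + 1 := by positivity
  refine Eq.trans_le ?_ (Real.convexOn_log_Gamma.slope_le_deriv hy hy1 (lt_add_one y)
    (analyticAt_log_Gamma_s5 hy1).differentiableAt)
  simp [slope_def_field, log_Gamma_add_one_s5 hy]

theorem tendsto_digamma_sub_log : Tendsto (fun y => digamma y - Real.log y) atTop (𝓝 0) := by
  have hinv : Tendsto (fun y : ℝ => -y⁻¹) atTop (𝓝 0) := by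
    simpa only [neg_zero] using (tendsto_inv_atTop_zero (𝕜 := ℝ)).neg
  refine tendsto_of_tendsto_of_tendsto_of_le_of_le' hinv tendsto_const_nhds ?_ ?_
  · filter_upwards [eventually_gt_atTop 0] with y hy
    linarith [digamma_add_one_s5 hy, log_le_digamma_add_one_s5 hy]
  · filter_upwards [eventually_gt_atTop 0] with y hy
    exact sub_nonpos.2 (digamma_le_log_s5 hy)

theorem tendsto_log_sub_sum_inv_digamma {y : ℝ} (hy : 0 < y) :
    Tendsto (fun n : ℕ => Real.log n - ∑ k ∈ Finset.range n, (y + k)⁻¹) atTop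
      (𝓝 (digamma y)) := by
  have hlog : Tendsto (fun n : ℕ => Real.log (n + y) - Real.log n) atTop (𝓝 0) :=
    (Real.tendsto_log_comp_add_sub_log y).comp tendsto_natCast_atTop_atTop
  have hdigamma : Tendsto (fun n : ℕ => digamma (n + y) - Real.log (n + y)) atTop (𝓝 0) :=
    tendsto_digamma_sub_log.comp
      (tendsto_atTop_add_const_right _ y tendsto_natCast_atTop_atTop)
  have hsub := tendsto_const_nhds (x := digamma y).sub (hdigamma.add hlog)
  rw [add_zero, sub_zero] at hsub
  refine hsub.congr fun n => ?_
  rw [add_comm (n : ℝ) y, digamma_add_natCast hy n]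
  ring

theorem concaveOn_log_sub_sum_inv (n : ℕ) :
    ConcaveOn ℝ (Ioi 0) fun y : ℝ => Real.log n - ∑ k ∈ Finset.range n, (y + k)⁻¹ := by
  refine (concaveOn_const _ (convex_Ioi 0)).sub ?_
  rw [← Finset.sum_fn]
  refine Finset.sum_induction _ (ConvexOn ℝ (Ioi 0)) (fun _ _ => ConvexOn.add)
    (convexOn_const 0 (convex_Ioi 0)) fun k _ => ?_
  exact (convexOn_inv_add_const (k : ℝ)).subset (Ioi_subset_Ioi (by simp)) (convex_Ioi 0)

theorem concaveOn_digamma : ConcaveOn ℝ (Ioi 0) digamma :=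
  concaveOn_of_tendsto (.of_forall concaveOn_log_sub_sum_inv)
    fun _ hy => tendsto_log_sub_sum_inv_digamma hy

theorem deriv_deriv_digamma_nonpos {y : ℝ} (hy : 0 < y) : deriv (deriv digamma) y ≤ 0 := by
  have hanti : AntitoneOn (deriv digamma) (Ioi 0) :=
    concaveOn_digamma.antitoneOn_deriv fun z hz => (analyticAt_digamma_s5 hz).differentiableAt
  rw [← derivWithin_of_isOpen isOpen_Ioi hy]
  exact hanti.derivWithin_nonpos

/-- The denominator of `trigammaApprox`, in the centred variable `x = y - 1 / 2`. -/
noncomputable def trigammaDenom (x : ℝ) : ℝ := 560 * x ^ 4 + 520 * x ^ 2 + 27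

/-- The rational approximant `S` to the trigamma function `ψ'` on `(0, ∞)`. It is the derivative
of the approximant `y ↦ L (y - 1) a` to `ψ` for `a = (40 + 3 * √205) / 105`. -/
noncomputable def trigammaApprox (y : ℝ) : ℝ :=
  20 / 3 * ((y - 1 / 2) * (84 * (y - 1 / 2) ^ 2 + 71)) / trigammaDenom (y - 1 / 2)

/-- The polynomial `Q` for which `192 ^ 2 / Q y` is the defect of `trigammaApprox` in the
functional equation `ψ' (y + 1) = ψ' y - 1 / y ^ 2`. -/
noncomputable def trigammaDefectDenom (y : ℝ) : ℝ :=
  y ^ 2 * (trigammaDenom (y - 1 / 2) * trigammaDenom (y + 1 / 2))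

theorem trigammaDenom_pos (x : ℝ) : 0 < trigammaDenom x := by
  unfold trigammaDenom
  positivity

theorem trigammaDefectDenom_pos {y : ℝ} (hy : y ≠ 0) : 0 < trigammaDefectDenom y :=
  mul_pos (by positivity) (mul_pos (trigammaDenom_pos _) (trigammaDenom_pos _))

theorem trigammaApprox_add_one {y : ℝ} (hy : y ≠ 0) :
    trigammaApprox (y + 1) =
      trigammaApprox y + (-(y ^ 2)⁻¹ + 192 ^ 2 * (trigammaDefectDenom y)⁻¹) := by
  have hsub := (trigammaDenom_pos (y - 1 / 2)).ne'
  have hadd := (trigammaDenom_pos (y + 1 / 2)).ne'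
  rw [trigammaApprox, trigammaApprox, trigammaDefectDenom, show y + 1 - 1 / 2 = y + 1 / 2 by ring]
  generalize hA : trigammaDenom (y - 1 / 2) = A at hsub ⊢
  generalize hB : trigammaDenom (y + 1 / 2) = B at hadd ⊢
  field_simp
  subst A B
  unfold trigammaDenom
  ring

theorem hasDerivAt_trigammaDefectDenom (y : ℝ) :
    HasDerivAt trigammaDefectDenom
      (2 * y * (36864 - 235520 * y ^ 2 + 817920 * y ^ 4 + 1075200 * y ^ 6 + 1568000 * y ^ 8))
      y := by
  have hexpand : trigammaDefectDenom = fun z => 36864 * z ^ 2 - 117760 * z ^ 4 + 272640 * z ^ 6 +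
      268800 * z ^ 8 + 313600 * z ^ 10 := by
    funext z
    unfold trigammaDefectDenom trigammaDenom
    ring
  rw [hexpand]
  refine ((((((hasDerivAt_pow 2 y).const_mul 36864).sub ((hasDerivAt_pow 4 y).const_mul 117760)).add
    ((hasDerivAt_pow 6 y).const_mul 272640)).add ((hasDerivAt_pow 8 y).const_mul 268800)).add
    ((hasDerivAt_pow 10 y).const_mul 313600)).congr_deriv ?_
  push_cast
  ring

theorem deriv_trigammaDefectDenom_pos {y : ℝ} (hy : 0 < y) : 0 < deriv trigammaDefectDenom y := by
  have hquad : 0 < 36864 - 235520 * y ^ 2 + 817920 * y ^ 4 := by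
    nlinarith [sq_nonneg (y ^ 2 - 1 / 7)]
  rw [(hasDerivAt_trigammaDefectDenom y).deriv]
  positivity

theorem hasDerivAt_trigammaApprox (y : ℝ) :
    HasDerivAt trigammaApprox
      (-(20 / 3) * (47040 * (y - 1 / 2) ^ 6 + 75600 * (y - 1 / 2) ^ 4 + 30116 * (y - 1 / 2) ^ 2 -
        1917) / trigammaDenom (y - 1 / 2) ^ 2) y := by
  refine HasDerivAt.comp_sub_const y (1 / 2)
    (f := fun x => 20 / 3 * (x * (84 * x ^ 2 + 71)) / trigammaDenom x) ?_
  generalize y - 1 / 2 = x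
  have hdenom : HasDerivAt trigammaDenom (2240 * x ^ 3 + 1040 * x) x := by
    refine ((((hasDerivAt_pow 4 x).const_mul 560).add
      ((hasDerivAt_pow 2 x).const_mul 520)).add_const 27).congr_deriv ?_
    push_cast
    ring
  have hnum : HasDerivAt (fun x : ℝ => 20 / 3 * (x * (84 * x ^ 2 + 71)))
      (20 / 3 * (252 * x ^ 2 + 71)) x := by
    refine (((hasDerivAt_id' x).mul
      (((hasDerivAt_pow 2 x).const_mul 84).add_const 71)).const_mul (20 / 3)).congr_deriv ?_
    push_cast
    ring
  refine (hnum.fun_div hdenom (trigammaDenom_pos x).ne').congr_deriv ?_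
  unfold trigammaDenom
  ring

theorem deriv_trigammaApprox_add_one_lt {y : ℝ} (hy : 0 < y) :
    deriv trigammaApprox (y + 1) < deriv trigammaApprox y + 2 / y ^ 3 := by
  have hQ := trigammaDefectDenom_pos hy.ne'
  have hQ' := deriv_trigammaDefectDenom_pos hy
  have hdefect := (hasDerivAt_neg_sq_inv hy.ne').fun_add
    (((hasDerivAt_trigammaDefectDenom y).differentiableAt.hasDerivAt.fun_inv hQ.ne').const_mul
      ((192 : ℝ) ^ 2))
  have hshift := deriv_add_const_eq_of_eventually
    ((eventually_ne_nhds hy.ne').mono fun _ => trigammaApprox_add_one)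
    (hasDerivAt_trigammaApprox y).differentiableAt hdefect.differentiableAt
  have hneg : 192 ^ 2 * (-deriv trigammaDefectDenom y / trigammaDefectDenom y ^ 2) < 0 :=
    mul_neg_of_pos_of_neg (by positivity) (div_neg_of_neg_of_pos (neg_neg_of_pos hQ')
      (by positivity))
  rw [hshift, hdefect.deriv]
  linarith

theorem neg_sq_inv_le_deriv_trigammaApprox {y : ℝ} (hy : y ≠ 1 / 2) :
    -((y - 1 / 2) ^ 2)⁻¹ ≤ deriv trigammaApprox y := by
  rw [(hasDerivAt_trigammaApprox y).deriv]
  have hx : 0 < (y - 1 / 2) ^ 2 := by have := sub_ne_zero.2 hy; positivity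
  generalize y - 1 / 2 = x at hx ⊢
  rw [neg_mul, neg_div, neg_le_neg_iff, inv_eq_one_div,
    div_le_div_iff₀ (pow_pos (trigammaDenom_pos x) 2) hx, ← sub_nonneg]
  calc (0 : ℝ) ≤ 78400 * x ^ 6 + 299600 / 3 * x ^ 4 + 40860 * x ^ 2 + 729 := by positivity
    _ = _ := by unfold trigammaDenom; ring

theorem deriv_deriv_digamma_lt_deriv_trigammaApprox {y : ℝ} (hy : 0 < y) :
    deriv (deriv digamma) y < deriv trigammaApprox y := by
  have hanti : StrictAnti fun n : ℕ =>
      deriv trigammaApprox (y + n) - deriv (deriv digamma) (y + n) := by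
    refine strictAnti_nat_of_succ_lt fun n => ?_
    have hyn : 0 < y + n := by positivity
    rw [Nat.cast_succ, ← add_assoc, deriv_deriv_digamma_add_one hyn]
    linarith [deriv_trigammaApprox_add_one_lt hyn]
  have hatTop : Tendsto (fun n : ℕ => y + n) atTop atTop :=
    tendsto_atTop_add_const_left _ y tendsto_natCast_atTop_atTop
  have hlower : Tendsto (fun n : ℕ => -((y + n - 1 / 2) ^ 2)⁻¹) atTop (𝓝 0) := by
    rw [← neg_zero]
    exact ((tendsto_pow_atTop two_ne_zero).comp
      (tendsto_atTop_add_const_right _ (-(1 / 2)) hatTop)).inv_tendsto_atTop.neg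
  have hle : (fun n : ℕ => -((y + n - 1 / 2) ^ 2)⁻¹) ≤ᶠ[atTop]
      fun n => deriv trigammaApprox (y + n) - deriv (deriv digamma) (y + n) := by
    filter_upwards [hatTop.eventually_ne_atTop (1 / 2)] with n hn
    linarith [neg_sq_inv_le_deriv_trigammaApprox hn,
      deriv_deriv_digamma_nonpos (show 0 < y + n by positivity)]
  simpa using lt_of_strictAnti_of_tendsto_of_eventuallyLE hanti hlower hle 0

/-- For all x > −1/2, ψ''(x + 1/2) < −(20/3)·(47040x⁶ + 75600x⁴ + 30116x² − 1917)/(560x⁴ + 520x² + 27)². -/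
theorem stmt_5 (x : ℝ) (hx : -(1 / 2) < x) :
    iteratedDeriv 2 digamma (x + 1 / 2) <
      -(20 / 3) * (47040 * x ^ 6 + 75600 * x ^ 4 + 30116 * x ^ 2 - 1917) /
        (560 * x ^ 4 + 520 * x ^ 2 + 27) ^ 2 := by
  have hlt := deriv_deriv_digamma_lt_deriv_trigammaApprox (y := x + 1 / 2) (by linarith)
  rw [(hasDerivAt_trigammaApprox _).deriv, add_sub_cancel_right, trigammaDenom] at hlt
  rwa [iteratedDeriv_succ, iteratedDeriv_one]
end

section
/- The equation ψ''(1) + (3/2)·(2025a⁴ + 1620a³ + 360a² − 36a + 1)/((3a+1)²(15a−1)²) = 0 has a unique root a₀'' in the interval (1/15, ∞) (numerically a₀'' ≈ 0.4321803644583305, and a₀'' ∈ (1/3, 1/2)); moreover, for a > 1/15, the function F_a is convex on (0, ∞) if and only if a ∈ (1/15, a₀'']. -/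
open Real Filter Set

/-! Put `u = x² + x`. Then `∂L/∂x` depends on `a` only through the increasing function
`s = (3a + 1)(15a - 1) / (45a)`, and convexity of `F_a` says that `W(u, s) ≥ 2 ∑ 1 / (x + 1 + n)³`
for all `x > 0`, where `W = -∂²L/∂x²` is strictly decreasing in `s`. Letting `x → 0` gives the
necessary condition `W(0, s) ≥ 2 ζ(3)`, that is `a ≤ a₀''`. For its sufficiency, let `s` satisfy it.

* If `s ≤ 9 / 14`, or if `x ≥ 1 / 100` (and `s ≤ 13 / 20`, as is always the case), the series is
  bounded termwise by the telescoping one of `W(x² + x, s')`, for `s' = 9 / 14` or `s' = 13 / 20`.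
* For smaller `x` and `s > 9 / 14` the inequality has no room at the critical `s`, so it is reduced
  to its instance at `x = 0`: the difference `W(u, 9 / 14) - W(u, s)` decreases in `u`, so
  `W(·, s)` falls no more than `W(·, 9 / 14)` does, and the latter falls less than the first term
  of the series alone. -/

/-- The Hurwitz-type series `∑ 1 / (x + n) ^ k`; the derivatives of the digamma function are
multiples of it. -/
noncomputable def hurwitzSum (k : ℕ) (x : ℝ) : ℝ := ∑' n : ℕ, 1 / (x + n) ^ k

lemma summable_one_div_add_nat_pow {k : ℕ} (hk : 1 < k) {x : ℝ} (hx : 0 < x) :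
    Summable fun n : ℕ ↦ 1 / (x + n) ^ k := by
  refine ((Real.summable_one_div_nat_add_rpow x k).2 (mod_cast hk)).congr fun n ↦ ?_
  rw [abs_of_pos (by positivity), Real.rpow_natCast, add_comm]

lemma hasDerivAt_hurwitzSum {k : ℕ} (hk : 1 < k) {x : ℝ} (hx : 0 < x) :
    HasDerivAt (hurwitzSum k) (-k * hurwitzSum (k + 1) x) x := by
  obtain ⟨δ, hδ, hδx⟩ := exists_between hx
  have hterm (n : ℕ) (y : ℝ) (hy : y ∈ Ioi δ) :
      HasDerivAt (fun z : ℝ ↦ 1 / (z + n) ^ k) (-k * (1 / (y + n) ^ (k + 1))) y := by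
    have hpos : 0 < y + n := by linarith [mem_Ioi.1 hy, n.cast_nonneg (α := ℝ)]
    have h := (hasDerivAt_zpow (-k) (y + n) (.inl hpos.ne')).comp_add_const y (n : ℝ)
    rw [← neg_add', ← Nat.cast_succ] at h
    simpa only [zpow_neg, zpow_natCast, one_div, Int.cast_neg, Int.cast_natCast] using h
  have hbound (n : ℕ) (y : ℝ) (hy : y ∈ Ioi δ) :
      ‖-k * (1 / (y + n) ^ (k + 1))‖ ≤ k * (1 / (δ + n) ^ (k + 1)) := by
    have hy' : δ < y := hy
    have hpos : 0 < y := hδ.trans hy'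
    rw [norm_mul, norm_neg, RCLike.norm_natCast, Real.norm_of_nonneg (by positivity)]
    gcongr
  rw [hurwitzSum, ← tsum_mul_left]
  exact hasDerivAt_tsum_of_isPreconnected
    ((summable_one_div_add_nat_pow (hk.trans k.lt_succ_self) hδ).mul_left (k : ℝ))
    isOpen_Ioi isPreconnected_Ioi hterm hbound hδx (summable_one_div_add_nat_pow hk hx) hδx

lemma norm_digamma_term_le {δ b x : ℝ} (hδ : 0 < δ) (hδ1 : δ ≤ 1) (hδx : δ < x) (hxb : x < b)
    (n : ℕ) : ‖1 / ((n : ℝ) + 1) - 1 / (x + n)‖ ≤ (b + 1) * (1 / (δ + n) ^ 2) := by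
  have hx : 0 < x := hδ.trans hδx
  have hb : 0 < b := hx.trans hxb
  have hnum : |x - 1| ≤ b + 1 := abs_le.2 ⟨by linarith, by linarith⟩
  calc ‖1 / ((n : ℝ) + 1) - 1 / (x + n)‖ = |x - 1| / ((1 + n) * (x + n)) := by
        rw [← abs_of_pos (by positivity : 0 < (1 + (n : ℝ)) * (x + n)), ← abs_div,
          ← Real.norm_eq_abs]
        congr 1
        field_simp
        ring
    _ ≤ (b + 1) / ((δ + n) * (δ + n)) := by gcongr
    _ = (b + 1) * (1 / (δ + n) ^ 2) := by ring

lemma summable_digamma_term {x : ℝ} (hx : 0 < x) :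
    Summable fun n : ℕ ↦ 1 / ((n : ℝ) + 1) - 1 / (x + n) := by
  obtain ⟨δ, hδ, hδx⟩ := exists_between (lt_min hx one_pos)
  rw [lt_min_iff] at hδx
  exact .of_norm_bounded ((summable_one_div_add_nat_pow one_lt_two hδ).mul_left (x + 1 + 1))
    (norm_digamma_term_le hδ hδx.2.le hδx.1 (lt_add_one x))

lemma hasDerivAt_logGammaSeq {x : ℝ} (hx : 0 < x) (n : ℕ) :
    HasDerivAt (fun y ↦ BohrMollerup.logGammaSeq y n)
      ((Real.log n - harmonic (n + 1)) +
        ∑ m ∈ Finset.range (n + 1), (1 / ((m : ℝ) + 1) - 1 / (x + m))) x := by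
  have hlog (m : ℕ) : HasDerivAt (fun y : ℝ ↦ Real.log (y + m)) (1 / (x + m)) x :=
    ((hasDerivAt_id' x).add_const (m : ℝ)).log (by positivity)
  refine ((((hasDerivAt_id' x).mul_const (Real.log n)).add_const _).sub
    (.fun_sum fun m _ ↦ hlog m)).congr_deriv ?_
  simp only [Finset.sum_sub_distrib, harmonic, one_div]
  push_cast
  ring

lemma tendsto_log_sub_harmonic_succ :
    Tendsto (fun n : ℕ ↦ Real.log n - (harmonic (n + 1) : ℝ)) atTop
      (nhds (-eulerMascheroniConstant)) := by
  have h := (tendsto_harmonic_sub_log.add (tendsto_one_div_add_atTop_nhds_zero_nat (𝕜 := ℝ))).neg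
  rw [add_zero] at h
  refine h.congr fun n ↦ ?_
  rw [harmonic_succ]
  push_cast
  ring

theorem hasDerivAt_log_Gamma_s9 {x : ℝ} (hx : 0 < x) :
    HasDerivAt (fun y ↦ Real.log (Real.Gamma y))
      (-eulerMascheroniConstant + ∑' n : ℕ, (1 / ((n : ℝ) + 1) - 1 / (x + n))) x := by
  obtain ⟨δ, hδ, hδx⟩ := exists_between (lt_min hx one_pos)
  rw [lt_min_iff] at hδx
  have hsum : TendstoUniformlyOn
      (fun (n : ℕ) (y : ℝ) ↦ ∑ m ∈ Finset.range n, (1 / ((m : ℝ) + 1) - 1 / (y + m)))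
      (fun y ↦ ∑' m : ℕ, (1 / ((m : ℝ) + 1) - 1 / (y + m))) atTop (Ioo δ (x + 1)) :=
    tendstoUniformlyOn_tsum_nat
      ((summable_one_div_add_nat_pow one_lt_two hδ).mul_left (x + 1 + 1))
      fun n y hy ↦ norm_digamma_term_le hδ hδx.2.le hy.1 hy.2 n
  have hsum_succ := fun u hu ↦ (tendsto_add_atTop_nat 1).eventually (hsum u hu)
  exact hasDerivAt_of_tendstoUniformlyOn isOpen_Ioo
    ((tendsto_log_sub_harmonic_succ.tendstoUniformlyOn_const _).add hsum_succ)
    (.of_forall fun n y hy ↦ hasDerivAt_logGammaSeq (hδ.trans hy.1) n)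
    (fun y hy ↦ BohrMollerup.tendsto_log_gamma (hδ.trans hy.1))
    ⟨hδx.1, lt_add_one x⟩

theorem hasDerivAt_digamma {x : ℝ} (hx : 0 < x) : HasDerivAt digamma (hurwitzSum 2 x) x := by
  obtain ⟨δ, hδ, hδx⟩ := exists_between hx
  have hterm (n : ℕ) (y : ℝ) (hy : y ∈ Ioi δ) :
      HasDerivAt (fun z : ℝ ↦ 1 / ((n : ℝ) + 1) - 1 / (z + n)) (1 / (y + n) ^ 2) y := by
    have hpos : 0 < y + n := by linarith [mem_Ioi.1 hy, n.cast_nonneg (α := ℝ)]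
    simpa only [one_div, neg_div, neg_neg] using
      (((hasDerivAt_id' y).add_const (n : ℝ)).fun_inv hpos.ne').const_sub (1 / ((n : ℝ) + 1))
  have hbound (n : ℕ) (y : ℝ) (hy : y ∈ Ioi δ) : ‖1 / (y + n) ^ 2‖ ≤ 1 / (δ + n) ^ 2 := by
    have hy' : δ < y := hy
    have hpos : 0 < y := hδ.trans hy'
    rw [Real.norm_of_nonneg (by positivity)]
    gcongr
  have hseries := (hasDerivAt_tsum_of_isPreconnected
    (summable_one_div_add_nat_pow one_lt_two hδ) isOpen_Ioi isPreconnected_Ioi hterm hbound hδx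
    (summable_digamma_term hx) hδx).const_add (-eulerMascheroniConstant)
  refine hseries.congr_of_eventuallyEq ?_
  filter_upwards [Ioi_mem_nhds hx] with y hy using (hasDerivAt_log_Gamma_s9 hy).deriv

theorem iteratedDeriv_two_digamma {x : ℝ} (hx : 0 < x) :
    iteratedDeriv 2 digamma x = -2 * hurwitzSum 3 x := by
  rw [iteratedDeriv_succ, iteratedDeriv_one]
  refine ((hasDerivAt_hurwitzSum one_lt_two hx).congr_of_eventuallyEq ?_).deriv
  filter_upwards [Ioi_mem_nhds hx] with y hy using (hasDerivAt_digamma hy).deriv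

lemma tsum_le_of_le_sub_succ {f v : ℕ → ℝ} (hf : ∀ n, 0 ≤ f n) (hv : ∀ n, 0 ≤ v n)
    (h : ∀ n, f n ≤ v n - v (n + 1)) : ∑' n, f n ≤ v 0 := by
  refine Real.tsum_le_of_sum_range_le hf fun N ↦ ?_
  calc ∑ n ∈ Finset.range N, f n ≤ ∑ n ∈ Finset.range N, (v n - v (n + 1)) := by gcongr; apply h
    _ = v 0 - v N := Finset.sum_range_sub' v N
    _ ≤ v 0 := sub_le_self _ (hv N)

lemma convexOn_iff_forall_nonneg_of_hasDerivAt {S : Set ℝ} (hS : IsOpen S) (hconv : Convex ℝ S)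
    {f f' f'' : ℝ → ℝ} (hf : ∀ x ∈ S, HasDerivAt f (f' x) x)
    (hf' : ∀ x ∈ S, HasDerivAt f' (f'' x) x) :
    ConvexOn ℝ S f ↔ ∀ x ∈ S, 0 ≤ f'' x := by
  constructor
  · intro h x hx
    have hmono : MonotoneOn f' S :=
      (h.monotoneOn_deriv fun y hy ↦ (hf y hy).differentiableAt).congr
        fun y hy ↦ (hf y hy).deriv
    rw [← (hf' x hx).hasDerivWithinAt.derivWithin (hS.uniqueDiffWithinAt hx)]
    exact hmono.derivWithin_nonneg
  · intro h
    rw [← hS.interior_eq] at hf hf' h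
    exact convexOn_of_hasDerivWithinAt2_nonneg hconv
      (fun x hx ↦ (hf x (hS.interior_eq.symm ▸ hx)).continuousAt.continuousWithinAt)
      (fun x hx ↦ (hf x hx).hasDerivWithinAt) (fun x hx ↦ (hf' x hx).hasDerivWithinAt) h

/-- The product of the two quadratics under the logarithms of `L`, as a function of
`u = x² + x` and `s = shapeParam a`; see `mul_eq_quadProd`. -/
noncomputable def quadProd (u s : ℝ) : ℝ := u ^ 2 + (s + 2 / 5) * u + s / 3

/-- Three times the product of the constant terms `(3a + 1) / 3` and `(15a - 1) / (45a)` of the two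
quadratics in `L`; the derivative `∂L/∂x` depends on `a` only through it. -/
noncomputable def shapeParam (a : ℝ) : ℝ := (3 * a + 1) * (15 * a - 1) / (45 * a)

/-- The derivative `∂L/∂x` at `x`, where `s = shapeParam a`. -/
noncomputable def logSlope (s x : ℝ) : ℝ :=
  (x + 1 / 2) * (x ^ 2 + x + s + 1 / 15) / quadProd (x ^ 2 + x) s

/-- The negated second derivative `-∂²L/∂x²`, where `u = x² + x` and `s = shapeParam a`. -/
noncomputable def logCurvature (u s : ℝ) : ℝ :=
  ((u + s + 1 / 15) * (u ^ 2 + u * s + 7 * u / 30 + s / 6 + 1 / 30) + (4 * u + 1) / 90) /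
    quadProd u s ^ 2

lemma quadProd_pos {u s : ℝ} (hu : 0 ≤ u) (hs : 0 < s) : 0 < quadProd u s := by
  unfold quadProd
  positivity

lemma logCurvature_nonneg {u s : ℝ} (hu : 0 ≤ u) (hs : 0 < s) : 0 ≤ logCurvature u s := by
  unfold logCurvature
  positivity

lemma mul_eq_quadProd {a : ℝ} (ha : a ≠ 0) (u : ℝ) :
    (u + (3 * a + 1) / 3) * (u + (15 * a - 1) / (45 * a)) = quadProd u (shapeParam a) := by
  unfold quadProd shapeParam
  field_simp
  ring

lemma shapeParam_eq {a : ℝ} (ha : a ≠ 0) : shapeParam a = a - 1 / (45 * a) + 4 / 15 := by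
  unfold shapeParam
  field_simp
  ring

lemma shapeParam_pos {a : ℝ} (ha : 1 / 15 < a) : 0 < shapeParam a := by
  have : 0 < 15 * a - 1 := by linarith
  unfold shapeParam
  positivity

lemma strictMonoOn_shapeParam : StrictMonoOn shapeParam (Ioi 0) := by
  intro a ha b hb hab
  have ha' : 0 < a := ha
  rw [shapeParam_eq ha'.ne', shapeParam_eq (ne_of_gt hb)]
  gcongr

lemma hasDerivAt_sq_add_self_add (x c : ℝ) :
    HasDerivAt (fun y : ℝ ↦ y ^ 2 + y + c) (2 * x + 1) x := by
  simpa using ((hasDerivAt_pow 2 x).fun_add (hasDerivAt_id' x)).add_const c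

lemma hasDerivAt_L_s9 {a x : ℝ} (ha : 1 / 15 < a) (hx : 0 ≤ x) :
    HasDerivAt (fun y ↦ L y a) (logSlope (shapeParam a) x) x := by
  have ha0 : 0 < a := by linarith
  have hq : 0 < (15 * a - 1) / (45 * a) := div_pos (by linarith) (by linarith)
  have hP : 0 < x ^ 2 + x + (3 * a + 1) / 3 := by positivity
  have hQ : 0 < x ^ 2 + x + (15 * a - 1) / (45 * a) := by positivity
  refine ((((hasDerivAt_sq_add_self_add x _).log hP.ne').const_mul _).fun_add
    (((hasDerivAt_sq_add_self_add x _).log hQ.ne').const_mul _)).congr_deriv ?_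
  have hmean : x ^ 2 + x + shapeParam a + 1 / 15 =
      2 / (90 * a ^ 2 + 2) * (x ^ 2 + x + (15 * a - 1) / (45 * a)) +
        90 * a ^ 2 / (90 * a ^ 2 + 2) * (x ^ 2 + x + (3 * a + 1) / 3) := by
    unfold shapeParam
    field_simp
    ring
  rw [logSlope, ← mul_eq_quadProd ha0.ne', hmean]
  generalize x ^ 2 + x + (15 * a - 1) / (45 * a) = q at hQ ⊢
  generalize x ^ 2 + x + (3 * a + 1) / 3 = p at hP ⊢
  field_simp
  ring

lemma hasDerivAt_logSlope {s x : ℝ} (hs : 0 < s) (hx : 0 ≤ x) :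
    HasDerivAt (logSlope s) (-logCurvature (x ^ 2 + x) s) x := by
  have hu : HasDerivAt (fun y : ℝ ↦ y ^ 2 + y) (2 * x + 1) x := by
    simpa using hasDerivAt_sq_add_self_add x 0
  have hnum := ((hasDerivAt_id' x).add_const (1 / 2)).fun_mul ((hu.add_const s).add_const (1 / 15))
  have hden : HasDerivAt (fun y : ℝ ↦ quadProd (y ^ 2 + y) s)
      ((2 * (x ^ 2 + x) + (s + 2 / 5)) * (2 * x + 1)) x :=
    (((hu.fun_pow 2).fun_add (hu.const_mul (s + 2 / 5))).add_const (s / 3)).congr_deriv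
      (by simp; ring)
  have hpos : 0 < quadProd (x ^ 2 + x) s := quadProd_pos (by positivity) hs
  refine (hnum.fun_div hden hpos.ne').congr_deriv ?_
  rw [logCurvature, ← neg_div]
  congr 1
  unfold quadProd
  ring

lemma logCurvature_zero {s : ℝ} (hs : s ≠ 0) :
    logCurvature 0 s = 3 / 2 + 2 / (5 * s) + 3 / (25 * s ^ 2) := by
  unfold logCurvature quadProd
  field_simp
  ring

lemma logCurvature_zero_shapeParam {a : ℝ} (ha : 1 / 15 < a) :
    logCurvature 0 (shapeParam a) =
      (3 / 2) * (2025 * a ^ 4 + 1620 * a ^ 3 + 360 * a ^ 2 - 36 * a + 1) /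
        ((3 * a + 1) ^ 2 * (15 * a - 1) ^ 2) := by
  have h1 : a * 15 - 1 ≠ 0 := ne_of_gt (by linarith)
  have h2 : 3 * a + 1 ≠ 0 := ne_of_gt (by linarith)
  rw [logCurvature_zero (shapeParam_pos ha).ne']
  unfold shapeParam
  field_simp
  ring

/-- The polynomial numerator in the difference of `logCurvature u` at two values of its second
argument, see `logCurvature_sub`. -/
noncomputable def diffNumerator (u s : ℝ) : ℝ :=
  7 / 2 * u ^ 2 + 3 / 2 * (u * s) + 8 / 5 * u + s / 3 + 1 / 5

lemma logCurvature_sub {u s t : ℝ} (hs : quadProd u s ≠ 0) (ht : quadProd u t ≠ 0) :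
    logCurvature u s - logCurvature u t = (t - s) / 45 *
      (diffNumerator u s / quadProd u s ^ 2 * (1 / quadProd u t) +
        diffNumerator u t / quadProd u t ^ 2 * (1 / quadProd u s)) := by
  unfold logCurvature
  field_simp
  unfold diffNumerator quadProd
  ring

lemma strictAntiOn_logCurvature {u : ℝ} (hu : 0 ≤ u) :
    StrictAntiOn (logCurvature u) (Ioi 0) := by
  intro s hs t ht hst
  have hs' : 0 < s := hs
  have ht' : 0 < t := ht
  have hDs := quadProd_pos hu hs
  have hDt := quadProd_pos hu ht
  rw [← sub_pos, logCurvature_sub hDs.ne' hDt.ne']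
  have : 0 < t - s := sub_pos.2 hst
  unfold diffNumerator
  positivity

lemma antitoneOn_diffNumerator_div_sq {s : ℝ} (hs : 0 < s) :
    AntitoneOn (fun u ↦ diffNumerator u s / quadProd u s ^ 2) (Ici 0) := by
  intro u hu v hv huv
  have hDu := quadProd_pos hu hs
  have hDv := quadProd_pos hv hs
  have hu' : 0 ≤ u := hu
  obtain ⟨h, hh, rfl⟩ : ∃ h, 0 ≤ h ∧ v = u + h := ⟨v - u, sub_nonneg.2 huv, by ring⟩
  beta_reduce
  rw [div_le_div_iff₀ (by positivity) (by positivity), ← sub_nonneg]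
  unfold diffNumerator quadProd
  ring_nf
  positivity

lemma antitoneOn_logCurvature_sub {s t : ℝ} (hs : 0 < s) (hst : s ≤ t) :
    AntitoneOn (fun u ↦ logCurvature u s - logCurvature u t) (Ici 0) := by
  intro u hu v hv huv
  have hu' : 0 ≤ u := hu
  have ht := hs.trans_le hst
  have hD {r : ℝ} (hr : 0 < r) : 0 < quadProd u r ∧ 0 < quadProd v r :=
    ⟨quadProd_pos hu hr, quadProd_pos hv hr⟩
  have hinv {r : ℝ} (hr : 0 < r) : 1 / quadProd v r ≤ 1 / quadProd u r := by
    have := (hD hr).1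
    unfold quadProd at *
    gcongr
  have hratio {r : ℝ} (hr : 0 < r) := antitoneOn_diffNumerator_div_sq hr hu hv huv
  beta_reduce
  rw [logCurvature_sub (hD hs).1.ne' (hD ht).1.ne', logCurvature_sub (hD hs).2.ne' (hD ht).2.ne']
  have hnonneg {r : ℝ} (hr : 0 < r) : 0 ≤ diffNumerator u r / quadProd u r ^ 2 ∧
      0 ≤ 1 / quadProd v r :=
    ⟨by unfold diffNumerator; positivity, (one_div_pos.2 (hD hr).2).le⟩
  have hterm {r r' : ℝ} (hr : 0 < r) (hr' : 0 < r') :=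
    mul_le_mul (hratio hr) (hinv hr') (hnonneg hr').2 (hnonneg hr).1
  exact mul_le_mul_of_nonneg_left (add_le_add (hterm hs ht) (hterm ht hs)) (by linarith)

lemma two_mul_hurwitzSum_three_le_logCurvature {s x : ℝ} (hs : 0 < s) (hx : 0 ≤ x)
    (hstep : ∀ y, x ≤ y → 2 * (1 / (y + 1) ^ 3) ≤
      logCurvature (y ^ 2 + y) s - logCurvature ((y + 1) ^ 2 + (y + 1)) s) :
    2 * hurwitzSum 3 (x + 1) ≤ logCurvature (x ^ 2 + x) s := by
  rw [hurwitzSum, ← tsum_mul_left]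
  refine (tsum_le_of_le_sub_succ
    (v := fun n : ℕ ↦ logCurvature ((x + n) ^ 2 + (x + n)) s) (fun n ↦ by positivity)
    (fun n ↦ logCurvature_nonneg (by positivity) hs) fun n ↦ ?_).trans_eq (by simp)
  have h := hstep (x + n) (by simp)
  rw [add_assoc x (n : ℝ) 1, ← Nat.cast_add_one] at h
  rwa [add_right_comm, add_assoc x (n : ℝ) 1, ← Nat.cast_add_one]

-- `9 / 14` and `13 / 20` bracket the root `s ≈ 0.6474` of `logCurvature 0 s = 2 ζ(3)`. After
-- clearing denominators, and after the shift `y = z + 1 / 100` in the second case (where the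
-- inequality fails at `y = 0`), the difference of the two sides has only nonnegative coefficients.
lemma two_div_cube_le_logCurvature_sub_lower {y : ℝ} (hy : 0 ≤ y) :
    2 * (1 / (y + 1) ^ 3) ≤ logCurvature (y ^ 2 + y) (9 / 14) -
      logCurvature ((y + 1) ^ 2 + (y + 1)) (9 / 14) := by
  unfold logCurvature quadProd
  rw [div_sub_div _ _ (by positivity) (by positivity), mul_one_div,
    div_le_div_iff₀ (by positivity) (by positivity), ← sub_nonneg]
  ring_nf
  positivity

lemma two_div_cube_le_logCurvature_sub_upper {y : ℝ} (hy : 1 / 100 ≤ y) :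
    2 * (1 / (y + 1) ^ 3) ≤ logCurvature (y ^ 2 + y) (13 / 20) -
      logCurvature ((y + 1) ^ 2 + (y + 1)) (13 / 20) := by
  obtain ⟨z, hz, rfl⟩ : ∃ z : ℝ, 0 ≤ z ∧ y = z + 1 / 100 := ⟨y - 1 / 100, by linarith, by ring⟩
  unfold logCurvature quadProd
  rw [div_sub_div _ _ (by positivity) (by positivity), mul_one_div,
    div_le_div_iff₀ (by positivity) (by positivity), ← sub_nonneg]
  ring_nf
  positivity

lemma logCurvature_zero_sub_le {x : ℝ} (hx : 0 ≤ x) (hx' : x ≤ 1 / 100) :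
    logCurvature 0 (9 / 14) - logCurvature (x ^ 2 + x) (9 / 14) ≤ 2 * (1 - 1 / (x + 1) ^ 3) := by
  have hpow (k : ℕ) : x ^ (k + 1) ≤ x * (1 / 100) ^ k := by
    rw [pow_succ']
    gcongr
  have hzero : logCurvature 0 (9 / 14) = 3257 / 1350 := by norm_num [logCurvature_zero]
  rw [hzero, sub_le_comm, one_sub_div (by positivity), ← mul_div_assoc,
    logCurvature, quadProd, sub_le_iff_le_add, div_add_div _ _ (by positivity) (by positivity),
    le_div_iff₀ (by positivity)]
  linarith [hpow 1, hpow 2, hpow 3, hpow 4, hpow 5, hpow 6, hpow 7, hpow 8, hpow 9, hpow 10]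

lemma one_sub_le_hurwitzSum_three_sub {x : ℝ} (hx : 0 ≤ x) :
    1 - 1 / (x + 1) ^ 3 ≤ hurwitzSum 3 1 - hurwitzSum 3 (x + 1) := by
  have h1 := summable_one_div_add_nat_pow (k := 3) (by norm_num) one_pos
  have hx1 := summable_one_div_add_nat_pow (k := 3) (by norm_num) (by positivity : 0 < x + 1)
  rw [hurwitzSum, hurwitzSum, ← h1.tsum_sub hx1]
  refine le_of_eq_of_le (by simp) ((h1.sub hx1).le_tsum 0 fun n _ ↦ ?_)
  rw [sub_nonneg]
  gcongr
  linarith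

lemma logCurvature_zero_lt_two_mul_hurwitzSum_three :
    logCurvature 0 (13 / 20) < 2 * hurwitzSum 3 1 := by
  have hpartial := (summable_one_div_add_nat_pow (k := 3) (by norm_num) one_pos).sum_le_tsum
    (Finset.range 15) fun n _ ↦ by positivity
  refine lt_of_lt_of_le ?_ (mul_le_mul_of_nonneg_left hpartial zero_le_two)
  rw [logCurvature_zero (by norm_num)]
  norm_num [Finset.sum_range_succ]

lemma two_mul_hurwitzSum_three_le_logCurvature_of_le {s x : ℝ} (hs : 0 < s) (hs' : s ≤ 9 / 14)
    (hx : 0 ≤ x) : 2 * hurwitzSum 3 (x + 1) ≤ logCurvature (x ^ 2 + x) s :=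
  (two_mul_hurwitzSum_three_le_logCurvature (by norm_num) hx fun _ hy ↦
    two_div_cube_le_logCurvature_sub_lower (hx.trans hy)).trans
    ((strictAntiOn_logCurvature (by positivity)).antitoneOn hs (by norm_num) hs')

theorem forall_two_mul_hurwitzSum_three_le {s : ℝ} (hs : 0 < s)
    (h0 : 2 * hurwitzSum 3 1 ≤ logCurvature 0 s) {x : ℝ} (hx : 0 ≤ x) :
    2 * hurwitzSum 3 (x + 1) ≤ logCurvature (x ^ 2 + x) s := by
  have hanti {u : ℝ} (hu : 0 ≤ u) := (strictAntiOn_logCurvature hu).antitoneOn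
  have hs_upper : s ≤ 13 / 20 := ((strictAntiOn_logCurvature le_rfl).le_iff_ge (by norm_num) hs).1
    (logCurvature_zero_lt_two_mul_hurwitzSum_three.le.trans h0)
  rcases le_total s (9 / 14) with hs_lower | hs_lower
  · exact two_mul_hurwitzSum_three_le_logCurvature_of_le hs hs_lower hx
  rcases le_total x (1 / 100) with hx' | hx'
  · have hdiff := antitoneOn_logCurvature_sub (by norm_num) hs_lower self_mem_Ici
      (by positivity : 0 ≤ x ^ 2 + x) (by positivity)
    have hL := logCurvature_zero_sub_le hx hx'
    have hH := one_sub_le_hurwitzSum_three_sub hx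
    linarith
  · exact (two_mul_hurwitzSum_three_le_logCurvature (by norm_num) hx fun _ hy ↦
      two_div_cube_le_logCurvature_sub_upper (hx'.trans hy)).trans
      (hanti (by positivity) hs (by norm_num) hs_upper)

lemma forall_pos_two_mul_hurwitzSum_three_le_iff {s : ℝ} (hs : 0 < s) :
    (∀ x ∈ Ioi (0 : ℝ), 2 * hurwitzSum 3 (x + 1) ≤ logCurvature (x ^ 2 + x) s) ↔
      2 * hurwitzSum 3 1 ≤ logCurvature 0 s := by
  refine ⟨fun h ↦ ?_, fun h0 x hx ↦ forall_two_mul_hurwitzSum_three_le hs h0 (le_of_lt hx)⟩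
  have hH : ContinuousAt (fun x : ℝ ↦ 2 * hurwitzSum 3 (x + 1)) 0 :=
    ((hasDerivAt_hurwitzSum (k := 3) (by norm_num) (by norm_num)).comp_add_const 0
      (1 : ℝ)).continuousAt.const_mul 2
  have hL : ContinuousAt (fun x : ℝ ↦ logCurvature (x ^ 2 + x) s) 0 := by
    unfold logCurvature quadProd
    fun_prop (disch := simp [hs.ne'])
  simpa using le_of_tendsto_of_tendsto (hH.mono_left nhdsWithin_le_nhds)
    (hL.mono_left nhdsWithin_le_nhds) (eventually_nhdsWithin_of_forall h)

theorem convexOn_digamma_sub_L_iff {a : ℝ} (ha : 1 / 15 < a) :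
    ConvexOn ℝ (Ioi 0) (fun x ↦ digamma (x + 1) - L x a) ↔
      2 * hurwitzSum 3 1 ≤ logCurvature 0 (shapeParam a) := by
  have hs := shapeParam_pos ha
  have hF (x : ℝ) (hx : x ∈ Ioi 0) : HasDerivAt (fun x ↦ digamma (x + 1) - L x a)
      (hurwitzSum 2 (x + 1) - logSlope (shapeParam a) x) x :=
    ((hasDerivAt_digamma (add_pos hx one_pos)).comp_add_const x 1).fun_sub
      (hasDerivAt_L_s9 ha (le_of_lt hx))
  have hF' (x : ℝ) (hx : x ∈ Ioi 0) :
      HasDerivAt (fun x ↦ hurwitzSum 2 (x + 1) - logSlope (shapeParam a) x)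
        (logCurvature (x ^ 2 + x) (shapeParam a) - 2 * hurwitzSum 3 (x + 1)) x :=
    (((hasDerivAt_hurwitzSum one_lt_two (add_pos hx one_pos)).comp_add_const x 1).fun_sub
      (hasDerivAt_logSlope hs (le_of_lt hx))).congr_deriv (by push_cast; ring)
  rw [convexOn_iff_forall_nonneg_of_hasDerivAt isOpen_Ioi (convex_Ioi 0) hF hF',
    ← forall_pos_two_mul_hurwitzSum_three_le_iff hs]
  simp only [sub_nonneg]

lemma strictAntiOn_logCurvature_zero_shapeParam :
    StrictAntiOn (fun a ↦ logCurvature 0 (shapeParam a)) (Ioi (1 / 15)) :=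
  (strictAntiOn_logCurvature le_rfl).comp_strictMonoOn
    (strictMonoOn_shapeParam.mono (Ioi_subset_Ioi (by norm_num))) fun _ ha ↦ shapeParam_pos ha

lemma exists_logCurvature_zero_shapeParam_eq :
    ∃ a ∈ Ioo (1 / 3 : ℝ) (1 / 2), logCurvature 0 (shapeParam a) = 2 * hurwitzSum 3 1 := by
  have hcont : ContinuousOn (fun a ↦ logCurvature 0 (shapeParam a)) (Icc (1 / 3) (1 / 2)) := by
    intro a ha
    have ha' : 1 / 15 < a := by linarith [ha.1]
    have h0 : 45 * a ≠ 0 := ne_of_gt (by linarith)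
    have hs := shapeParam_pos ha'
    have hshape : ContinuousAt shapeParam a := by
      unfold shapeParam
      fun_prop (disch := assumption)
    have hcurv : ContinuousAt (logCurvature 0) (shapeParam a) := by
      unfold logCurvature quadProd
      fun_prop (disch := simp [hs.ne'])
    exact (hcurv.comp hshape).continuousWithinAt
  have hanti := strictAntiOn_logCurvature (le_refl 0)
  have hthird : 2 * hurwitzSum 3 1 < logCurvature 0 (shapeParam (1 / 3)) := by
    have h : 2 * hurwitzSum 3 1 ≤ logCurvature 0 (9 / 14) := by
      simpa using two_mul_hurwitzSum_three_le_logCurvature_of_le (by norm_num) le_rfl (le_refl 0)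
    exact h.trans_lt (hanti (by norm_num [shapeParam]) (by norm_num) (by norm_num [shapeParam]))
  have hhalf : logCurvature 0 (shapeParam (1 / 2)) < 2 * hurwitzSum 3 1 :=
    (hanti (by norm_num) (by norm_num [shapeParam]) (by norm_num [shapeParam])).trans
      logCurvature_zero_lt_two_mul_hurwitzSum_three
  exact intermediate_value_Ioo' (by norm_num) hcont ⟨hhalf, hthird⟩

/-- The equation ψ''(1) + (3/2)·(2025a⁴ + 1620a³ + 360a² − 36a + 1)/((3a+1)²(15a−1)²) = 0 has a
unique root a₀'' in (1/15, ∞), with a₀'' ∈ (1/3, 1/2); and for a > 1/15, F_a is convex on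
(0, ∞) iff a ∈ (1/15, a₀'']. -/
theorem stmt_9 :
    ∃ a₀ : ℝ, a₀ ∈ Set.Ioo (1 / 3 : ℝ) (1 / 2) ∧
      (∀ a ∈ Set.Ioi (1 / 15 : ℝ),
        (iteratedDeriv 2 digamma 1 +
            (3 / 2) * (2025 * a ^ 4 + 1620 * a ^ 3 + 360 * a ^ 2 - 36 * a + 1) /
              ((3 * a + 1) ^ 2 * (15 * a - 1) ^ 2) = 0) ↔ a = a₀) ∧
      (∀ a : ℝ, 1 / 15 < a →
        (ConvexOn ℝ (Set.Ioi 0) (fun x : ℝ => digamma (x + 1) - L x a) ↔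
          a ∈ Set.Ioc (1 / 15 : ℝ) a₀)) := by
  obtain ⟨a₀, ha₀, hroot⟩ := exists_logCurvature_zero_shapeParam_eq
  have ha₀' : a₀ ∈ Ioi (1 / 15 : ℝ) := (by norm_num : (1 / 15 : ℝ) < 1 / 3).trans ha₀.1
  have hanti := strictAntiOn_logCurvature_zero_shapeParam
  refine ⟨a₀, ha₀, fun a ha ↦ ?_, fun a ha ↦ ?_⟩
  · rw [iteratedDeriv_two_digamma one_pos, ← logCurvature_zero_shapeParam ha, neg_mul,
      neg_add_eq_zero, ← hroot]
    exact hanti.eq_iff_eq ha₀' ha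
  · rw [convexOn_digamma_sub_L_iff ha, ← hroot, hanti.le_iff_ge ha₀' ha]
    exact (and_iff_right ha).symm
end
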